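/- Let (W,W') be an exchangeable pair (i.e., (W,W') and (W',W) have the same joint distribution) with Δ = W−W' satisfying |Δ| ≤ δ and E(Δ|W) = λ(g(W)−R(W)) for some 0<λ<1, where g satisfies (A1)–(A4). Set K̂₁ = Δ²/(2λ). Assume there exist τ₁>0, τ₂>0, δ₁>0, δ₂≥0 with |E(K̂₁|W)−1| ≤ δ₁(|g(W)|^{τ₁}+1) and |R(W)| ≤ δ₂(|g(W)|^{τ₂}+1), and constants d₀≥1, d₁>0, 0≤α<1 with E(K̂₁|W) ≤ d₀, δ|g(W)| ≤ d₁, and |R(W)| ≤ α(|g(W)|+1). Then there is a finite constant C, depending only on d₀, d₁, c₁, c₂, c₃, τ₁, τ₂, α and max(g(1),|g(−1)|), such that for every z ≥ 0 with δ·z·g(z)² + δ₁·z·g(z)^{τ₁+1} + δ₂·z·g(z)^{τ₂} ≤ 1, |P(W>z)/P(Y>z) − 1| ≤ C·( δ(1+z·g(z)²) + δ₁(1+z·g(z)^{τ₁+1}) + δ₂(1+z·g(z)^{τ₂}) ). -/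

import Mathlib

open MeasureTheory Real

/-- Conditions (A1)–(A4) on the function `g`. -/
structure GCond (g : ℝ → ℝ) (c₂ c₃ : ℝ) : Prop where
  diff : Differentiable ℝ g
  mono : Monotone g
  zero : g 0 = 0
  sign : ∀ y : ℝ, y ≠ 0 → 0 < y * g y
  c₂pos : 0 < c₂
  subadd : ∀ x y : ℝ, |g (x + y)| ≤ c₂ * (|g x| + |g y| + 1)
  c₃ge : 1 ≤ c₃
  derivBound : ∀ y : ℝ, |deriv g y| ≤ c₃ * (1 + |g y|) / (1 + |y|)

/-- `G(y) = ∫₀^y g`. -/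
noncomputable def Gfun (g : ℝ → ℝ) (y : ℝ) : ℝ := ∫ t in (0:ℝ)..y, g t

/-- The density `p(y) = c₁ e^{-G(y)}`. -/
noncomputable def pfun (g : ℝ → ℝ) (c₁ y : ℝ) : ℝ := c₁ * Real.exp (-(Gfun g y))


/-- Pointwise admissibility of the values of `(W, R, E(K|W))`. -/
structure Adm (g : ℝ → ℝ) (δ δ₁ δ₂ τ₁ τ₂ d₀ d₁ α : ℝ) (w r k : ℝ) : Prop where
  hd₁ : δ * |g w| ≤ d₁
  hk0 : 0 ≤ k
  hkd : k ≤ d₀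
  hk1 : |k - 1| ≤ δ₁ * (|g w| ^ τ₁ + 1)
  hr2 : |r| ≤ δ₂ * (|g w| ^ τ₂ + 1)
  hra : |r| ≤ α * (|g w| + 1)

/-- The Stein inequality satisfied by the law of `W`. -/
def IneqProp (ν : Measure ℝ) (g : ℝ → ℝ) (δ δ₁ δ₂ τ₁ τ₂ d₀ d₁ α : ℝ) : Prop :=
  ∀ f D Φ : ℝ → ℝ, Measurable f → Measurable D → Measurable Φ →
    (∃ M, ∀ w, δ * |g w| ≤ d₁ → |f w| ≤ M ∧ |D w| ≤ M ∧ |Φ w| ≤ M) →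
    (∀ x y, |x - y| ≤ δ → (x - y) * (f x - f y) ≤ D x * (x - y) ^ 2) →
    (∀ w r k, Adm g δ δ₁ δ₂ τ₁ τ₂ d₀ d₁ α w r k → Φ w ≤ (g w - r) * f w - D w * k) →
    ∫ w, Φ w ∂ν ≤ 0

lemma integrable_of_bdd_ae {Ω : Type*} [MeasurableSpace Ω] {μ : Measure Ω} [IsFiniteMeasure μ]
    {f : Ω → ℝ} (hf : Measurable f) (M : ℝ) (h : ∀ᵐ ω ∂μ, |f ω| ≤ M) : Integrable f μ := by
  refine (integrable_const M).mono' hf.aestronglyMeasurable ?_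
  simpa using h

lemma ineqProp_of_pair {Ω : Type*} (m : MeasurableSpace Ω) [m0 : MeasurableSpace Ω] (μ : Measure Ω) [IsProbabilityMeasure μ]
    (W W' R : Ω → ℝ) (g : ℝ → ℝ) (lam δ δ₁ δ₂ τ₁ τ₂ d₀ d₁ α : ℝ)
    (hW : Measurable W) (hW' : Measurable W') (hg : Measurable g)
    (hlam : 0 < lam) (hm : m = MeasurableSpace.comap W Real.measurableSpace)
    (hex : Measure.map (fun ω => (W ω, W' ω)) μ = Measure.map (fun ω => (W' ω, W ω)) μ)
    (hΔ : ∀ ω, |W ω - W' ω| ≤ δ)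
    (hE : μ[fun ω => W ω - W' ω | m]
          =ᵐ[μ] fun ω => lam * (g (W ω) - R ω))
    (hK1 : ∀ᵐ ω ∂μ, |(μ[fun ω => (W ω - W' ω) ^ 2 / (2 * lam) |
              m]) ω - 1|
            ≤ δ₁ * (|g (W ω)| ^ τ₁ + 1))
    (hR2 : ∀ᵐ ω ∂μ, |R ω| ≤ δ₂ * (|g (W ω)| ^ τ₂ + 1))
    (hKd : ∀ᵐ ω ∂μ, (μ[fun ω => (W ω - W' ω) ^ 2 / (2 * lam) |
              m]) ω ≤ d₀)
    (hg1 : ∀ᵐ ω ∂μ, δ * |g (W ω)| ≤ d₁)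
    (hRa : ∀ᵐ ω ∂μ, |R ω| ≤ α * (|g (W ω)| + 1)) :
    IneqProp (Measure.map W μ) g δ δ₁ δ₂ τ₁ τ₂ d₀ d₁ α := by
  intro f D Φ hf hD hΦ ⟨M, hM⟩ hslope hpt
  have hm0 : m ≤ m0 := hm ▸ hW.comap_le
  have hWm : Measurable[m] W := by rw [hm]; exact comap_measurable W
  -- law equality
  have hlaw : Measure.map W μ = Measure.map W' μ := by
    have := congrArg (Measure.map Prod.fst) hex
    rw [Measure.map_map measurable_fst (hW.prodMk hW'), Measure.map_map measurable_fst (hW'.prodMk hW)] at this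
    exact this
  have hset : MeasurableSet {w : ℝ | δ * |g w| ≤ d₁} :=
    measurableSet_le (by fun_prop) measurable_const
  have hg1' : ∀ᵐ ω ∂μ, δ * |g (W' ω)| ≤ d₁ := by
    have h1 : ∀ᵐ w ∂(Measure.map W μ), δ * |g w| ≤ d₁ := (ae_map_iff hW.aemeasurable hset).2 hg1
    rw [hlaw] at h1
    exact (ae_map_iff hW'.aemeasurable hset).1 h1
  have hδ0 : 0 ≤ δ := by
    obtain ⟨ω⟩ : Nonempty Ω := nonempty_of_isProbabilityMeasure μ
    exact (abs_nonneg _).trans (hΔ ω)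
  have hfW : Integrable (fun ω => f (W ω)) μ :=
    integrable_of_bdd_ae (hf.comp hW) M (by filter_upwards [hg1] with ω h using (hM _ h).1)
  have hfW' : Integrable (fun ω => f (W' ω)) μ :=
    integrable_of_bdd_ae (hf.comp hW') M (by filter_upwards [hg1'] with ω h using (hM _ h).1)
  have hDW : Integrable (fun ω => D (W ω)) μ :=
    integrable_of_bdd_ae (hD.comp hW) M (by filter_upwards [hg1] with ω h using (hM _ h).2.1)
  have hΔm : Measurable (fun ω => W ω - W' ω) := hW.sub hW'
  have hΔi : Integrable (fun ω => W ω - W' ω) μ :=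
    integrable_of_bdd_ae hΔm δ (Filter.Eventually.of_forall hΔ)
  have hΔ2 : ∀ ω, |(W ω - W' ω) ^ 2 / (2 * lam)| ≤ δ ^ 2 / (2 * lam) := by
    intro ω
    rw [abs_of_nonneg (by positivity), ← sq_abs]
    have := hΔ ω
    gcongr
  have hKm : Measurable (fun ω => (W ω - W' ω) ^ 2 / (2 * lam)) := (hΔm.pow_const 2).div_const _
  have hKi : Integrable (fun ω => (W ω - W' ω) ^ 2 / (2 * lam)) μ :=
    integrable_of_bdd_ae hKm _ (Filter.Eventually.of_forall hΔ2)
  have i1 : Integrable (fun ω => f (W ω) * (W ω - W' ω)) μ :=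
    hfW.mul_bdd hΔm.aestronglyMeasurable (Filter.Eventually.of_forall hΔ)
  have i1' : Integrable (fun ω => f (W' ω) * (W ω - W' ω)) μ :=
    hfW'.mul_bdd hΔm.aestronglyMeasurable (Filter.Eventually.of_forall hΔ)
  have i2 : Integrable (fun ω => D (W ω) * ((W ω - W' ω) ^ 2 / (2 * lam))) μ :=
    hDW.mul_bdd hKm.aestronglyMeasurable (Filter.Eventually.of_forall hΔ2)
  -- exchangeability
  have hanti : ∫ ω, (f (W ω) * (W ω - W' ω) + f (W' ω) * (W ω - W' ω)) ∂μ = 0 := by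
    have hF : Measurable (fun q : ℝ × ℝ => f q.1 * (q.1 - q.2) + f q.2 * (q.1 - q.2)) := by fun_prop
    have e1 := integral_map (μ := μ) (hW.prodMk hW').aemeasurable hF.aestronglyMeasurable
    have e2 := integral_map (μ := μ) (hW'.prodMk hW).aemeasurable hF.aestronglyMeasurable
    rw [hex] at e1
    rw [e1] at e2
    simp only at e2
    have e3 : ∫ ω, (f (W' ω) * (W' ω - W ω) + f (W ω) * (W' ω - W ω)) ∂μ
        = - ∫ ω, (f (W ω) * (W ω - W' ω) + f (W' ω) * (W ω - W' ω)) ∂μ := by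
      rw [← integral_neg]; congr 1; ext ω; ring
    rw [e3] at e2
    linarith
  rw [integral_add i1 i1'] at hanti
  have c1 : ∫ ω, f (W ω) * (W ω - W' ω) ∂μ = ∫ ω, f (W ω) * (lam * (g (W ω) - R ω)) ∂μ := by
    rw [← integral_condExp hm0]
    apply integral_congr_ae
    have := condExp_mul_of_stronglyMeasurable_left (μ := μ) (m := m)
      (f := fun ω => f (W ω)) (g := fun ω => W ω - W' ω) (hf.comp hWm).stronglyMeasurable i1 hΔi
    filter_upwards [this, hE] with ω h1 h2
    have h1' : (μ[fun ω => f (W ω) * (W ω - W' ω)|m]) ω = _ := h1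
    rw [h1', Pi.mul_apply, h2]
  set k := μ[fun ω => (W ω - W' ω) ^ 2 / (2 * lam) | m] with hk
  have c2 : ∫ ω, D (W ω) * ((W ω - W' ω) ^ 2 / (2 * lam)) ∂μ = ∫ ω, D (W ω) * k ω ∂μ := by
    rw [← integral_condExp hm0]
    apply integral_congr_ae
    have := condExp_mul_of_stronglyMeasurable_left (μ := μ) (m := m)
      (f := fun ω => D (W ω)) (g := fun ω => (W ω - W' ω) ^ 2 / (2 * lam)) (hD.comp hWm).stronglyMeasurable i2 hKi
    exact this
  have hk0 : ∀ᵐ ω ∂μ, 0 ≤ k ω := 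
    condExp_nonneg (Filter.Eventually.of_forall fun ω => by simp only [Pi.zero_apply]; positivity)
  have i3 : Integrable (fun ω => f (W ω) * (g (W ω) - R ω)) μ := by
    have hb : Integrable (fun ω => f (W ω) * (lam * (g (W ω) - R ω))) μ := by
      have := condExp_mul_of_stronglyMeasurable_left (μ := μ) (m := m)
        (f := fun ω => f (W ω)) (g := fun ω => W ω - W' ω) (hf.comp hWm).stronglyMeasurable i1 hΔi
      refine (integrable_condExp (m := m) (μ := μ) (f := fun ω => f (W ω) * (W ω - W' ω))).congr ?_
      filter_upwards [this, hE] with ω h1 h2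
      have h1' : (μ[fun ω => f (W ω) * (W ω - W' ω)|m]) ω = _ := h1
      rw [h1', Pi.mul_apply, h2]
    have := hb.const_mul lam⁻¹
    refine this.congr (Filter.Eventually.of_forall fun ω => ?_)
    simp only; field_simp
  have i4 : Integrable (fun ω => D (W ω) * k ω) μ := by
    have := condExp_mul_of_stronglyMeasurable_left (μ := μ) (m := m)
      (f := fun ω => D (W ω)) (g := fun ω => (W ω - W' ω) ^ 2 / (2 * lam)) (hD.comp hWm).stronglyMeasurable i2 hKi
    exact (integrable_condExp (m := m) (μ := μ) (f := fun ω => D (W ω) * ((W ω - W' ω) ^ 2 / (2 * lam)))).congr this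
  have key : ∫ ω, f (W ω) * (g (W ω) - R ω) ∂μ ≤ ∫ ω, D (W ω) * k ω ∂μ := by
    rw [← c2]
    have e1 : ∫ ω, f (W ω) * (lam * (g (W ω) - R ω)) ∂μ = lam * ∫ ω, f (W ω) * (g (W ω) - R ω) ∂μ := by
      rw [← integral_const_mul]; congr 1; ext ω; ring
    have e2 : ∫ ω, (f (W ω) * (W ω - W' ω) - f (W' ω) * (W ω - W' ω)) ∂μ
        ≤ ∫ ω, (2 * lam) * (D (W ω) * ((W ω - W' ω) ^ 2 / (2 * lam))) ∂μ := by
      refine integral_mono (i1.sub i1') (i2.const_mul _) fun ω => ?_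
      have := hslope (W ω) (W' ω) (hΔ ω)
      have e : (2 * lam) * (D (W ω) * ((W ω - W' ω) ^ 2 / (2 * lam))) = D (W ω) * (W ω - W' ω) ^ 2 := by
        field_simp
      simp only
      rw [e]; linarith
    rw [integral_sub i1 i1', integral_const_mul] at e2
    have : 2 * lam * ∫ ω, f (W ω) * (g (W ω) - R ω) ∂μ ≤ 
      2 * lam * ∫ ω, D (W ω) * ((W ω - W' ω) ^ 2 / (2 * lam)) ∂μ := by linarith
    exact le_of_mul_le_mul_left this (by positivity)
  rw [integral_map hW.aemeasurable hΦ.aestronglyMeasurable]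
  have hΦi : Integrable (fun ω => Φ (W ω)) μ :=
    integrable_of_bdd_ae (hΦ.comp hW) M (by filter_upwards [hg1] with ω h using (hM _ h).2.2)
  calc ∫ ω, Φ (W ω) ∂μ ≤ ∫ ω, (f (W ω) * (g (W ω) - R ω) - D (W ω) * k ω) ∂μ := by
        refine integral_mono_ae hΦi (i3.sub i4) ?_
        filter_upwards [hK1, hR2, hKd, hg1, hRa, hk0] with ω a1 a2 a3 a4 a5 a6
        have := hpt (W ω) (R ω) (k ω) ⟨a4, a6, a3, a1, a2, a5⟩
        linarith [mul_comm (f (W ω)) (g (W ω) - R ω)]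
    _ ≤ 0 := by
        rw [integral_sub i3 i4]; linarith


/-- The properties of `g` used in the proof. -/
structure GG (g : ℝ → ℝ) (c₁ c₃ : ℝ) : Prop where
  diff : Differentiable ℝ g
  mono : Monotone g
  zero : g 0 = 0
  c₃ge : 1 ≤ c₃
  db : ∀ y : ℝ, |deriv g y| ≤ c₃ * (1 + |g y|) / (1 + |y|)
  c₁pos : 0 < c₁
  int1 : (∫ y : ℝ, pfun g c₁ y) = 1

namespace GG
variable {g : ℝ → ℝ} {c₁ c₃ : ℝ}

lemma cont (h : GG g c₁ c₃) : Continuous g := h.diff.continuous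
lemma meas (h : GG g c₁ c₃) : Measurable g := h.cont.measurable
lemma nonneg (h : GG g c₁ c₃) {x : ℝ} (hx : 0 ≤ x) : 0 ≤ g x := by
  rw [← h.zero]; exact h.mono hx
lemma nonpos (h : GG g c₁ c₃) {x : ℝ} (hx : x ≤ 0) : g x ≤ 0 := by
  rw [← h.zero]; exact h.mono hx
lemma c₃pos (h : GG g c₁ c₃) : 0 < c₃ := lt_of_lt_of_le one_pos h.c₃ge
lemma deriv_nonneg (h : GG g c₁ c₃) (y : ℝ) : 0 ≤ deriv g y := h.mono.deriv_nonneg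

lemma Gfun_refl (g : ℝ → ℝ) (y : ℝ) : Gfun (fun x => - g (-x)) y = Gfun g (-y) := by
  unfold Gfun
  rw [intervalIntegral.integral_neg, intervalIntegral.integral_comp_neg,
    intervalIntegral.integral_symm]
  simp

lemma refl (h : GG g c₁ c₃) : GG (fun x => - g (-x)) c₁ c₃ where
  diff := by have := h.diff; fun_prop
  mono := fun x y hxy => by simpa using h.mono (neg_le_neg hxy)
  zero := by simp [h.zero]
  c₃ge := h.c₃ge
  db := fun y => by
    have := h.db (-y)
    have e : deriv (fun x => - g (-x)) y = deriv g (-y) := by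
      have h1 : HasDerivAt (fun x => - g (-x)) (-(deriv g (-y) * (-1))) y :=
        ((h.diff (-y)).hasDerivAt.comp y (hasDerivAt_neg y)).neg
      rw [h1.deriv]; ring
    rw [e]; simpa using this
  c₁pos := h.c₁pos
  int1 := by
    have : (fun y => pfun (fun x => - g (-x)) c₁ y) = fun y => pfun g c₁ (-y) := by
      ext y; simp only [pfun, Gfun_refl]
    rw [this, integral_neg_eq_self (fun y => pfun g c₁ y)]; exact h.int1

lemma growth_pos (h : GG g c₁ c₃) {x y : ℝ} (hy : 0 ≤ y) (hxy : y ≤ x) :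
    1 + g x ≤ exp (c₃ * (x - y)) * (1 + g y) := by
  have hanti : AntitoneOn (fun t => exp (-(c₃ * t)) * (1 + g t)) (Set.Ici 0) := by
    apply antitoneOn_of_deriv_nonpos (convex_Ici 0)
    · have := h.cont; fun_prop
    · have := h.diff; fun_prop
    · intro t ht
      simp only [interior_Ici, Set.mem_Ioi] at ht
      have hd : HasDerivAt (fun t => exp (-(c₃ * t)) * (1 + g t))
          (exp (-(c₃ * t)) * (-(c₃ * 1)) * (1 + g t) + exp (-(c₃ * t)) * (deriv g t)) t :=
        (((hasDerivAt_id t).const_mul c₃).neg.exp).mul ((h.diff t).hasDerivAt.const_add 1)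
      rw [hd.deriv]
      have h1 := (le_abs_self _).trans (h.db t)
      have hg := h.nonneg ht.le
      rw [abs_of_nonneg hg, abs_of_pos ht] at h1
      have h2 : c₃ * (1 + g t) / (1 + t) ≤ c₃ * (1 + g t) := by
        apply div_le_self (mul_nonneg h.c₃pos.le (by linarith)) (by linarith)
      have : 0 < exp (-(c₃ * t)) := exp_pos _
      nlinarith
  have := hanti hy (hy.trans hxy : (0:ℝ) ≤ x) hxy
  simp only at this
  have e : exp (c₃ * (x - y)) * (1 + g y) = exp (c₃ * x) * (exp (-(c₃ * y)) * (1 + g y)) := by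
    rw [← mul_assoc, ← exp_add]; ring_nf
  have e2 : 1 + g x = exp (c₃ * x) * (exp (-(c₃ * x)) * (1 + g x)) := by
    rw [← mul_assoc, ← exp_add]; simp
  rw [e, e2]
  gcongr

lemma growth_aux (h : GG g c₁ c₃) {x y : ℝ} (hx : 0 ≤ x) :
    1 + |g x| ≤ exp (c₃ * |x - y|) * (1 + |g y|) := by
  have h1 : 1 ≤ exp (c₃ * |x - y|) := one_le_exp (mul_nonneg h.c₃pos.le (abs_nonneg _))
  rw [abs_of_nonneg (h.nonneg hx)]
  rcases le_total 0 y with hy | hy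
  · rw [abs_of_nonneg (h.nonneg hy)]
    rcases le_total y x with hxy | hxy
    · rw [abs_of_nonneg (sub_nonneg.2 hxy)]; exact h.growth_pos hy hxy
    · have := h.mono hxy
      have := h.nonneg hy
      nlinarith
  · have h2 := h.growth_pos le_rfl hx
    rw [h.zero] at h2
    have h3 : exp (c₃ * (x - 0)) ≤ exp (c₃ * |x - y|) := by
      rw [abs_of_nonneg (by linarith)]
      have := h.c₃pos.le
      gcongr
    have := abs_nonneg (g y)
    nlinarith

lemma growth (h : GG g c₁ c₃) (x y : ℝ) :
    1 + |g x| ≤ exp (c₃ * |x - y|) * (1 + |g y|) := by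
  rcases le_total 0 x with hx | hx
  · exact h.growth_aux hx
  · have := h.refl.growth_aux (x := -x) (y := -y) (by linarith)
    simp only [neg_neg, abs_neg] at this
    rwa [show -x - -y = -(x - y) by ring, abs_neg] at this

lemma growth1 (h : GG g c₁ c₃) {x y : ℝ} (hxy : |x - y| ≤ 1) :
    1 + |g x| ≤ exp c₃ * (1 + |g y|) := by
  refine (h.growth x y).trans ?_
  have : c₃ * |x - y| ≤ c₃ := by nlinarith [h.c₃pos]
  gcongr

lemma growth0 (h : GG g c₁ c₃) {x a : ℝ} (hx : |x| ≤ a) :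
    1 + |g x| ≤ exp (c₃ * a) := by
  have := h.growth x 0
  simp only [h.zero, abs_zero, add_zero, mul_one, sub_zero] at this
  refine this.trans ?_
  have := h.c₃pos.le
  gcongr

lemma lip (h : GG g c₁ c₃) {x y : ℝ} (hxy : |x - y| ≤ 1) :
    |g x - g y| ≤ c₃ * exp c₃ * (1 + |g y|) * |x - y| := by
  have := (convex_uIcc y x).norm_image_sub_le_of_norm_deriv_le (f := g)
    (C := c₃ * exp c₃ * (1 + |g y|)) (fun t _ => h.diff t) ?_ Set.left_mem_uIcc Set.right_mem_uIcc
  · simpa using this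
  · intro t ht
    have h1 : |t - y| ≤ 1 := (Set.abs_sub_left_of_mem_uIcc ht).trans hxy
    have h2 := h.growth1 h1
    have h3 := h.db t
    rw [norm_eq_abs]
    refine h3.trans ((div_le_self ?_ ?_).trans ?_)
    · have := h.c₃pos; positivity
    · linarith [abs_nonneg t]
    · have := h.c₃pos; nlinarith

lemma hasDerivAt_G (h : GG g c₁ c₃) (w : ℝ) : HasDerivAt (Gfun g) (g w) w :=
  intervalIntegral.integral_hasDerivAt_right (h.cont.intervalIntegrable _ _)
    (h.cont.stronglyMeasurableAtFilter _ _) h.cont.continuousAt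

lemma contG (h : GG g c₁ c₃) : Continuous (Gfun g) :=
  continuous_iff_continuousAt.2 fun w => (h.hasDerivAt_G w).continuousAt

lemma G_zero (g : ℝ → ℝ) : Gfun g 0 = 0 := by simp [Gfun]

lemma G_tangent (h : GG g c₁ c₃) (x y : ℝ) : Gfun g y + g y * (x - y) ≤ Gfun g x := by
  have e : Gfun g x - Gfun g y = ∫ t in y..x, g t := by
    unfold Gfun
    rw [intervalIntegral.integral_interval_sub_left (h.cont.intervalIntegrable _ _)
      (h.cont.intervalIntegrable _ _)]
  have e2 : g y * (x - y) = ∫ t in y..x, g y := by simp [mul_comm]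
  have : g y * (x - y) ≤ ∫ t in y..x, g t := by
    rw [e2]
    rcases le_total y x with hxy | hxy
    · exact intervalIntegral.integral_mono_on hxy (by simp) (h.cont.intervalIntegrable _ _)
        fun t ht => h.mono ht.1
    · rw [intervalIntegral.integral_symm x y, intervalIntegral.integral_symm x y]
      apply neg_le_neg
      exact intervalIntegral.integral_mono_on hxy (h.cont.intervalIntegrable _ _) (by simp)
        fun t ht => h.mono ht.2
  linarith

lemma G_nonneg (h : GG g c₁ c₃) (x : ℝ) : 0 ≤ Gfun g x := by
  have := h.G_tangent x 0
  simpa [h.zero, G_zero] using this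

lemma G_le (h : GG g c₁ c₃) (x y : ℝ) : Gfun g x - Gfun g y ≤ g x * (x - y) := by
  have := h.G_tangent y x
  linarith

lemma G_bound (h : GG g c₁ c₃) {x a : ℝ} (hx : |x| ≤ a) : Gfun g x ≤ a * exp (c₃ * a) := by
  have h1 := h.G_le x 0
  have h2 := h.growth0 hx
  rw [G_zero] at h1
  have h3 : g x * (x - 0) ≤ |g x| * |x| := by rw [sub_zero, ← abs_mul]; exact le_abs_self _
  have h4 : |g x| * |x| ≤ exp (c₃ * a) * a := by
    have := abs_nonneg (g x)
    have := abs_nonneg x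
    apply mul_le_mul <;> linarith [exp_pos (c₃ * a)]
  linarith

lemma cont_p (h : GG g c₁ c₃) : Continuous (pfun g c₁) := by
  have := h.contG
  unfold pfun; fun_prop

lemma p_pos (h : GG g c₁ c₃) (x : ℝ) : 0 < pfun g c₁ x := mul_pos h.c₁pos (exp_pos _)

lemma int_p (h : GG g c₁ c₃) : Integrable (pfun g c₁) := by
  by_contra hn
  have := h.int1
  rw [integral_undef hn] at this
  norm_num at this

lemma lower_pos (h : GG g c₁ c₃) {w : ℝ} (hw : exp 1 / c₁ ≤ w) : c₁ / exp 1 ≤ g w := by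
  have hc := h.c₁pos
  refine le_trans ?_ (h.mono hw)
  by_contra! hlt
  set w₀ := exp 1 / c₁ with hw₀
  have hw0 : 0 < w₀ := by positivity
  have hlow : ∀ t ∈ Set.Icc 0 w₀, c₁ * exp (-1) ≤ pfun g c₁ t := by
    intro t ht
    unfold pfun
    have h1 := h.G_le t 0
    rw [G_zero] at h1
    have h2 := h.mono ht.2
    have h3 : g t * t ≤ (c₁ / exp 1) * w₀ := by
      apply mul_le_mul _ ht.2 ht.1 (by positivity)
      linarith
    have h4 : (c₁ / exp 1) * w₀ = 1 := by rw [hw₀]; field_simp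
    have : -1 ≤ -Gfun g t := by linarith
    gcongr
  have key2 : (∫ t in Set.Icc 0 w₀, pfun g c₁ t) + ∫ t in Set.Ioi w₀, pfun g c₁ t ≤ 1 := by
    rw [← setIntegral_union _ measurableSet_Ioi h.int_p.integrableOn h.int_p.integrableOn, ← h.int1]
    · exact setIntegral_le_integral h.int_p (Filter.Eventually.of_forall fun x => (h.p_pos x).le)
    · rw [Set.disjoint_left]; intro t ht ht'; exact absurd ht.2 (not_le.2 ht')
  have key3 : 0 < ∫ t in Set.Ioi w₀, pfun g c₁ t := by
    rw [setIntegral_pos_iff_support_of_nonneg_ae (Filter.Eventually.of_forall fun x => (h.p_pos x).le)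
      h.int_p.integrableOn]
    have : Function.support (pfun g c₁) = Set.univ := by
      ext x; simp [(h.p_pos x).ne']
    rw [this]; simp
  have key4 : 1 ≤ ∫ t in Set.Icc 0 w₀, pfun g c₁ t := by
    have : ∫ t in Set.Icc 0 w₀, (c₁ * exp (-1)) = 1 := by
      rw [setIntegral_const]
      simp only [measureReal_def, Real.volume_Icc, sub_zero, smul_eq_mul]
      rw [ENNReal.toReal_ofReal hw0.le, hw₀, exp_neg]; field_simp
    rw [← this]
    apply setIntegral_mono_on _ h.int_p.integrableOn measurableSet_Icc hlow
    exact continuous_const.integrableOn_Icc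
  linarith

end GG


/-- Tail function of `Y`. -/
noncomputable def Qf (g : ℝ → ℝ) (c₁ z : ℝ) : ℝ := ∫ y in Set.Ioi z, pfun g c₁ y

lemma slope_le {u u' : ℝ → ℝ} (hu : Continuous u)
    (hu' : ∀ x, HasDerivWithinAt u (u' x) (Set.Ici x) x) {x y D : ℝ}
    (hD : ∀ ξ ∈ Set.uIcc x y, u' ξ ≤ D) : (x - y) * (u x - u y) ≤ D * (x - y) ^ 2 := by
  have main : ∀ a b : ℝ, a ≤ b → (∀ ξ ∈ Set.Icc a b, u' ξ ≤ D) → u b - u a ≤ D * (b - a) := by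
    intro a b hab hb
    have := image_le_of_deriv_right_le_deriv_boundary (f := u) (f' := u') (a := a) (b := b)
      (B := fun x => u a + D * (x - a)) (B' := fun _ => D) hu.continuousOn (fun x _ => hu' x)
      (by simp) (by fun_prop)
      (fun x _ => by
        have h1 : HasDerivAt (fun x => u a + D * (x - a)) (D * 1) x :=
          (((hasDerivAt_id x).sub_const a).const_mul D).const_add _
        simpa using h1.hasDerivWithinAt)
      (fun x hx => hb x ⟨hx.1, hx.2.le⟩) (Set.right_mem_Icc.2 hab)
    linarith
  rcases le_total x y with hxy | hxy
  · rw [Set.uIcc_of_le hxy] at hD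
    have := main x y hxy hD
    nlinarith
  · rw [Set.uIcc_of_ge hxy] at hD
    have := main y x hxy hD
    nlinarith

lemma abs_slope_le {u u' : ℝ → ℝ} (hu : Continuous u)
    (hu' : ∀ x, HasDerivWithinAt u (u' x) (Set.Ici x) x) {x y D : ℝ}
    (hD : ∀ ξ ∈ Set.uIcc x y, |u' ξ| ≤ D) : |u x - u y| ≤ D * |x - y| := by
  have h1 := slope_le hu hu' (x := x) (y := y) (D := D) fun ξ hξ => (le_abs_self _).trans (hD ξ hξ)
  have h2 := slope_le (u := fun t => - u t) (u' := fun t => - u' t) hu.neg (fun t => (hu' t).neg) (x := x) (y := y) (D := D)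
    fun ξ hξ => (neg_le_abs _).trans (hD ξ hξ)
  rcases eq_or_ne x y with rfl | hne
  · simp
  have hpos : 0 < |x - y| := abs_pos.2 (sub_ne_zero.2 hne)
  have h3 : |x - y| * |u x - u y| ≤ |x - y| * (D * |x - y|) := by
    rw [← abs_mul, abs_le]
    have : |x - y| * (D * |x - y|) = D * (x - y) ^ 2 := by rw [← sq_abs (x - y)]; ring
    constructor <;> nlinarith
  exact le_of_mul_le_mul_left h3 hpos

namespace GG
variable {g : ℝ → ℝ} {c₁ c₃ : ℝ}

lemma Q_pos (h : GG g c₁ c₃) (z : ℝ) : 0 < Qf g c₁ z := by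
  unfold Qf
  rw [setIntegral_pos_iff_support_of_nonneg_ae (Filter.Eventually.of_forall fun x => (h.p_pos x).le)
    h.int_p.integrableOn]
  have : Function.support (pfun g c₁) = Set.univ := by
    ext x; simp [(h.p_pos x).ne']
  rw [this]; simp

lemma Q_le_one (h : GG g c₁ c₃) (z : ℝ) : Qf g c₁ z ≤ 1 := by
  rw [← h.int1]
  exact setIntegral_le_integral h.int_p (Filter.Eventually.of_forall fun x => (h.p_pos x).le)

lemma Q_sub (h : GG g c₁ c₃) (a b : ℝ) : Qf g c₁ a - Qf g c₁ b = ∫ y in a..b, pfun g c₁ y :=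
  intervalIntegral.integral_Ioi_sub_Ioi' h.int_p.integrableOn h.int_p.integrableOn

lemma Q_anti (h : GG g c₁ c₃) {a b : ℝ} (hab : a ≤ b) : Qf g c₁ b ≤ Qf g c₁ a := by
  have := h.Q_sub a b
  have h2 : 0 ≤ ∫ y in a..b, pfun g c₁ y :=
    intervalIntegral.integral_nonneg hab fun x _ => (h.p_pos x).le
  linarith

lemma hasDerivAt_Q (h : GG g c₁ c₃) (w : ℝ) : HasDerivAt (Qf g c₁) (-pfun g c₁ w) w := by
  have e : Qf g c₁ = fun x => Qf g c₁ 0 - ∫ y in (0:ℝ)..x, pfun g c₁ y := by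
    ext x; rw [← h.Q_sub]; ring
  rw [e]
  exact (intervalIntegral.integral_hasDerivAt_right (h.cont_p.intervalIntegrable _ _)
    (h.cont_p.stronglyMeasurableAtFilter _ _) h.cont_p.continuousAt).const_sub _

lemma Q_refl (h : GG g c₁ c₃) (w : ℝ) : Qf (fun x => - g (-x)) c₁ (-w) = 1 - Qf g c₁ w := by
  have e : (fun y => pfun (fun x => - g (-x)) c₁ y) = fun y => pfun g c₁ (-y) := by
    ext y; simp only [pfun, Gfun_refl]
  have h1 : Qf (fun x => - g (-x)) c₁ (-w) = ∫ y in Set.Iic w, pfun g c₁ y := by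
    unfold Qf
    rw [e, integral_comp_neg_Ioi]; simp
  rw [h1, ← h.int1, ← intervalIntegral.integral_Iic_add_Ioi (b := w) h.int_p.integrableOn h.int_p.integrableOn]
  unfold Qf; ring

lemma mills_g (h : GG g c₁ c₃) {w : ℝ} (hg : 0 < g w) :
    g w * Qf g c₁ w ≤ c₁ * exp (-Gfun g w) := by
  have hb : Qf g c₁ w ≤ ∫ y in Set.Ioi w, (c₁ * exp (-Gfun g w) * exp (g w * w)) * exp (-g w * y) := by
    refine setIntegral_mono_on h.int_p.integrableOn 
      ((integrableOn_exp_mul_Ioi (by linarith) w).const_mul _) measurableSet_Ioi fun y _ => ?_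
    unfold pfun
    have := h.G_tangent y w
    have e : c₁ * exp (-Gfun g w) * exp (g w * w) * exp (-g w * y)
        = c₁ * exp (-Gfun g w + g w * w + -g w * y) := by rw [exp_add, exp_add]; ring
    rw [e]
    have := h.c₁pos.le
    gcongr
    linarith
  rw [integral_const_mul, integral_exp_mul_Ioi (by linarith)] at hb
  have e : c₁ * exp (-Gfun g w) * exp (g w * w) * (-exp (-g w * w) / -g w)
      = c₁ * exp (-Gfun g w) / g w := by
    have : exp (-g w * w) = (exp (g w * w))⁻¹ := by rw [← exp_neg]; ring_nf
    rw [this]; field_simp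
  rw [e, le_div_iff₀ hg] at hb
  linarith

end GG

/-- Threshold beyond which `g` is bounded below. -/
noncomputable def w0 (c₁ : ℝ) : ℝ := max (exp 1 / c₁) 1
/-- Lower bound for `g` beyond `w0`. -/
noncomputable def g0 (c₁ : ℝ) : ℝ := c₁ / exp 1

lemma one_le_w0 (c₁ : ℝ) : 1 ≤ w0 c₁ := le_max_right _ _
lemma g0_pos {c₁ : ℝ} (h : 0 < c₁) : 0 < g0 c₁ := div_pos h (exp_pos _)

namespace GG
variable {g : ℝ → ℝ} {c₁ c₃ : ℝ}

lemma lower (h : GG g c₁ c₃) {w : ℝ} (hw : w0 c₁ ≤ w) : g0 c₁ ≤ g w :=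
  h.lower_pos ((le_max_left _ _).trans hw)

end GG

/-- Constant in the Mills ratio upper bound. -/
noncomputable def Cm (c₁ c₃ : ℝ) : ℝ :=
  (1 / g0 c₁ + 1) * c₁ + exp (c₃ * w0 c₁) * exp (w0 c₁ * exp (c₃ * w0 c₁))

lemma Cm_pos {c₁ c₃ : ℝ} (h : 0 < c₁) : 0 < Cm c₁ c₃ := by
  have := g0_pos h
  unfold Cm; positivity

namespace GG
variable {g : ℝ → ℝ} {c₁ c₃ : ℝ}

lemma mills (h : GG g c₁ c₃) {w : ℝ} (hw : -1 ≤ w) :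
    (1 + |g w|) * Qf g c₁ w ≤ Cm c₁ c₃ * exp (-Gfun g w) := by
  have hg0 := g0_pos h.c₁pos
  have hc := h.c₁pos
  have hE := exp_pos (-Gfun g w)
  have h1 := one_le_w0 c₁
  unfold Cm
  rw [add_mul]
  rcases le_total (w0 c₁) w with hww | hww
  · have hl := h.lower hww
    have hm := h.mills_g (hg0.trans_le hl)
    have h2 : (1 + |g w|) ≤ (1 / g0 c₁ + 1) * g w := by
      rw [abs_of_pos (by linarith), add_mul, one_mul]
      have : 1 ≤ 1 / g0 c₁ * g w := by rw [one_div, ← div_eq_inv_mul, one_le_div hg0]; exact hl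
      linarith
    have h3 : (1 + |g w|) * Qf g c₁ w ≤ (1 / g0 c₁ + 1) * (g w * Qf g c₁ w) := by
      rw [← mul_assoc]; exact mul_le_mul_of_nonneg_right h2 (h.Q_pos w).le
    have h4 : (1 / g0 c₁ + 1) * (g w * Qf g c₁ w) ≤ (1 / g0 c₁ + 1) * (c₁ * exp (-Gfun g w)) := by
      gcongr
    have : 0 ≤ exp (c₃ * w0 c₁) * exp (w0 c₁ * exp (c₃ * w0 c₁)) * exp (-Gfun g w) := by positivity
    linarith
  · have ha : |w| ≤ w0 c₁ := abs_le.2 ⟨by linarith, hww⟩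
    have h2 := h.growth0 ha
    have h3 := h.G_bound ha
    have h4 : 1 ≤ exp (w0 c₁ * exp (c₃ * w0 c₁)) * exp (-Gfun g w) := by
      rw [← exp_add]; apply one_le_exp; linarith
    have h5 : (1 + |g w|) * Qf g c₁ w ≤ exp (c₃ * w0 c₁) * 1 :=
      mul_le_mul h2 (h.Q_le_one w) (h.Q_pos w).le (exp_pos _).le
    have h6 : exp (c₃ * w0 c₁) * 1 ≤ exp (c₃ * w0 c₁) * (exp (w0 c₁ * exp (c₃ * w0 c₁)) * exp (-Gfun g w)) := by
      gcongr
    have : 0 ≤ (1 / g0 c₁ + 1) * c₁ * exp (-Gfun g w) := by positivity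
    linarith

lemma mills' (h : GG g c₁ c₃) {w : ℝ} (hw : w ≤ 1) :
    (1 + |g w|) * (1 - Qf g c₁ w) ≤ Cm c₁ c₃ * exp (-Gfun g w) := by
  have := h.refl.mills (w := -w) (by linarith)
  rw [h.Q_refl, Gfun_refl] at this
  simpa using this

lemma mills_lower (h : GG g c₁ c₃) (w : ℝ) :
    c₁ * exp (-exp c₃) * exp (-Gfun g w) ≤ (1 + |g w|) * Qf g c₁ w := by
  set s := 1 / (1 + |g w|) with hs
  have hp : 0 < 1 + |g w| := by positivity
  have hs0 : 0 < s := by positivity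
  have hs1 : s ≤ 1 := by
    rw [hs, div_le_one hp]; linarith [abs_nonneg (g w)]
  have h1 : ∫ y in w..(w + s), c₁ * exp (-exp c₃) * exp (-Gfun g w) ≤ ∫ y in w..(w+s), pfun g c₁ y := by
    refine intervalIntegral.integral_mono_on (by linarith) (by simp) (h.cont_p.intervalIntegrable _ _) fun y hy => ?_
    unfold pfun
    rw [mul_assoc, ← exp_add]
    have := h.c₁pos.le
    gcongr
    have hyw : |y - w| ≤ 1 := by rw [abs_of_nonneg] <;> linarith [hy.1, hy.2]
    have h2 := h.growth1 hyw
    have h3 := h.G_le y w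
    have h4 : g y * (y - w) ≤ (exp c₃ * (1 + |g w|)) * s := by
      apply mul_le_mul _ (by linarith [hy.2]) (by linarith [hy.1]) (by positivity)
      linarith [le_abs_self (g y)]
    have h5 : (exp c₃ * (1 + |g w|)) * s = exp c₃ := by rw [hs]; field_simp
    linarith
  rw [intervalIntegral.integral_const, ← h.Q_sub] at h1
  have h2 := (h.Q_pos (w + s)).le
  simp only [add_sub_cancel_left, smul_eq_mul] at h1
  have h3 : s * (c₁ * exp (-exp c₃) * exp (-Gfun g w)) ≤ Qf g c₁ w := by linarith
  have h4 := mul_le_mul_of_nonneg_left h3 hp.le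
  rwa [← mul_assoc, hs, mul_one_div_cancel hp.ne', one_mul] at h4

lemma Q_diff (h : GG g c₁ c₃) {z z' δ C₀ : ℝ} (hz : 0 ≤ z) (hzz : |z' - z| ≤ δ) (hδ : δ * g z ≤ C₀) :
    |Qf g c₁ z' - Qf g c₁ z| ≤ δ * (c₁ * exp C₀ * exp (-Gfun g z)) := by
  rw [h.Q_sub, ← norm_eq_abs]
  have hgz := h.nonneg hz
  have := intervalIntegral.norm_integral_le_of_norm_le_const (a := z') (b := z) (f := pfun g c₁)
    (C := c₁ * exp C₀ * exp (-Gfun g z)) ?_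
  · refine this.trans ?_
    rw [mul_comm, abs_sub_comm]
    have := h.c₁pos
    gcongr
  · intro y hy
    have hy' : y ∈ Set.uIcc z z' := by rw [Set.uIcc_comm]; exact Set.uIoc_subset_uIcc hy
    have h1 : |y - z| ≤ δ := (Set.abs_sub_left_of_mem_uIcc hy').trans hzz
    rw [norm_eq_abs, abs_of_pos (h.p_pos y)]
    unfold pfun
    rw [mul_assoc, ← exp_add]
    have := h.c₁pos.le
    gcongr
    have h2 := h.G_tangent y z
    have h3 := (abs_le.1 h1).1
    nlinarith

end GG


lemma poly_lower (N : ℕ) (α A : ℝ) (hα0 : 0 ≤ α) (hα1 : α < 1) (hA : 0 ≤ A) :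
    ∃ C' : ℝ, 0 < C' ∧ ∀ x : ℝ, 0 ≤ x →
      (1 - α) / 2 * (1 + x) ^ (N + 1) - C' ≤
        (1 - α) * x ^ (N + 1) - α * x ^ N - A * (1 + x) ^ N := by
  set A' := (1 - α) * (N + 1) + α + A with hA'
  have hβ : 0 < 1 - α := by linarith
  have hA'0 : 0 < A' := by positivity
  refine ⟨A' * (2 * A' / (1 - α)) ^ N, by positivity, fun x hx => ?_⟩
  have hs : 0 < 1 + x := by linarith
  have bern : (1 + x) ^ (N + 1) - (N + 1) * (1 + x) ^ N ≤ x ^ (N + 1) := by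
    have h1 := one_add_mul_le_pow (a := -(1 / (1 + x))) (by
      have : 1 / (1 + x) ≤ 1 := by rw [div_le_one hs]; linarith
      linarith) (N + 1)
    have h2 := mul_le_mul_of_nonneg_left h1 (pow_pos hs (N + 1)).le
    rw [← mul_pow] at h2
    have e1 : (1 + x) * (1 + -(1 / (1 + x))) = x := by field_simp; ring
    have e2 : (1 + x) ^ (N + 1) * (1 + ((N + 1 : ℕ) : ℝ) * -(1 / (1 + x)))
        = (1 + x) ^ (N + 1) - (N + 1) * (1 + x) ^ N := by
      push_cast; field_simp; ring
    rw [e1, e2] at h2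
    exact h2
  have h2 : x ^ N ≤ (1 + x) ^ N := by gcongr; linarith
  have h3 : (1 - α) * (1 + x) ^ (N + 1) - A' * (1 + x) ^ N ≤
      (1 - α) * x ^ (N + 1) - α * x ^ N - A * (1 + x) ^ N := by
    have a1 := mul_le_mul_of_nonneg_left bern hβ.le
    have a2 := mul_le_mul_of_nonneg_left h2 hα0
    rw [hA']
    nlinarith
  refine le_trans ?_ h3
  have h4 : A' * (1 + x) ^ N ≤ (1 - α) / 2 * (1 + x) ^ (N + 1) + A' * (2 * A' / (1 - α)) ^ N := by
    rcases le_total (1 + x) (2 * A' / (1 - α)) with hc | hc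
    · have : (1 + x) ^ N ≤ (2 * A' / (1 - α)) ^ N := by gcongr
      have := mul_le_mul_of_nonneg_left this hA'0.le
      have : 0 ≤ (1 - α) / 2 * (1 + x) ^ (N + 1) := by positivity
      linarith
    · rw [div_le_iff₀ hβ] at hc
      have h5 : A' * (1 + x) ^ N ≤ ((1 - α) / 2 * (1 + x)) * (1 + x) ^ N := by
        gcongr; linarith
      have : 0 ≤ A' * (2 * A' / (1 - α)) ^ N := by positivity
      rw [pow_succ]; linarith
  linarith

lemma bdd_pow {g : ℝ → ℝ} {δ d₁ : ℝ} (hδ : 0 < δ) {w : ℝ} (hw : δ * |g w| ≤ d₁) (m : ℕ) :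
    (1 + |g w|) ^ m ≤ (1 + d₁ / δ) ^ m := by
  have : |g w| ≤ d₁ / δ := by rw [le_div_iff₀ hδ]; linarith
  gcongr

lemma moment_bound (n : ℕ) (c₁ c₃ d₀ α : ℝ) (hd₀ : 1 ≤ d₀) (hα0 : 0 ≤ α) (hα1 : α < 1) :
    ∃ C : ℝ, 0 < C ∧ ∀ (g : ℝ → ℝ) (ν : Measure ℝ) (δ δ₁ δ₂ τ₁ τ₂ d₁ : ℝ), GG g c₁ c₃ →
      IsProbabilityMeasure ν → 0 < δ → δ ≤ 1 → (∀ᵐ w ∂ν, δ * |g w| ≤ d₁) →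
      IneqProp ν g δ δ₁ δ₂ τ₁ τ₂ d₀ d₁ α → ∫ w, (1 + |g w|) ^ (2 * n + 2) ∂ν ≤ C := by
  set A := (2 * n + 1) * |c₃| * exp c₃ ^ (2 * n + 1) * d₀ with hA
  obtain ⟨C', hC', hpoly⟩ := poly_lower (2 * n + 1) α A hα0 hα1 (by positivity)
  have hβ : 0 < 1 - α := by linarith
  refine ⟨C' / ((1 - α) / 2), by positivity, ?_⟩
  intro g ν δ δ₁ δ₂ τ₁ τ₂ d₁ h hν hδ hδ1 hae hI
  have hgm := h.meas
  have hc3 := h.c₃pos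
  set D : ℝ → ℝ := fun w => (2 * n + 1) * c₃ * exp c₃ ^ (2 * n + 1) * (1 + |g w|) ^ (2 * n + 1) with hD
  set Φ : ℝ → ℝ := fun w => (1 - α) / 2 * (1 + |g w|) ^ (2 * n + 2) - C' with hΦ
  have hInt : Integrable (fun w => (1 + |g w|) ^ (2 * n + 2)) ν := by
    refine integrable_of_bdd_ae (by fun_prop) ((1 + d₁ / δ) ^ (2 * n + 2)) ?_
    filter_upwards [hae] with w hw
    rw [abs_of_nonneg (by positivity)]
    exact bdd_pow hδ hw _
  have := hI (fun w => g w ^ (2 * n + 1)) D Φ (by fun_prop) (by fun_prop) (by fun_prop) ?_ ?_ ?_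
  · rw [hΦ, integral_sub (hInt.const_mul _) (integrable_const _), integral_const_mul] at this
    simp only [integral_const, probReal_univ, smul_eq_mul, one_mul] at this
    rw [le_div_iff₀ (by positivity)]; linarith
  · set E := 1 + d₁ / δ with hE
    refine ⟨max (E ^ (2 * n + 1)) (max ((2 * n + 1) * c₃ * exp c₃ ^ (2 * n + 1) * E ^ (2 * n + 1))
      ((1 - α) / 2 * E ^ (2 * n + 2) + C')), fun w hw => ⟨?_, ?_, ?_⟩⟩
    · refine le_max_of_le_left ?_
      rw [abs_pow]
      refine le_trans ?_ (bdd_pow hδ hw _)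
      gcongr; linarith
    · refine le_max_of_le_right (le_max_of_le_left ?_)
      have := bdd_pow hδ hw (2 * n + 1)
      rw [hD, abs_of_nonneg (by positivity)]
      exact mul_le_mul_of_nonneg_left this (by positivity)
    · refine le_max_of_le_right (le_max_of_le_right ?_)
      have := mul_le_mul_of_nonneg_left (bdd_pow hδ hw (2 * n + 2)) (show 0 ≤ (1 - α) / 2 by positivity)
      have h0 : 0 ≤ (1 - α) / 2 * (1 + |g w|) ^ (2 * n + 2) := by positivity
      rw [hΦ, abs_le]; constructor <;> simp only <;> linarith
  · intro x y hxy
    refine slope_le (u' := fun t => ((2 * n + 1 : ℕ) : ℝ) * g t ^ (2 * n) * deriv g t) (by have := h.cont; fun_prop)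
      (fun t => ((h.diff t).hasDerivAt.pow (2 * n + 1)).hasDerivWithinAt) ?_
    intro ξ hξ
    have hξ1 : |ξ - x| ≤ 1 := by
      have := Set.abs_sub_left_of_mem_uIcc hξ
      rw [abs_sub_comm] at hxy; linarith
    have h1 := h.growth1 hξ1
    have h2 := (le_abs_self _).trans (h.db ξ)
    have h3 : c₃ * (1 + |g ξ|) / (1 + |ξ|) ≤ c₃ * (1 + |g ξ|) :=
      div_le_self (by positivity) (by linarith [abs_nonneg ξ])
    have h4 : g ξ ^ (2 * n) ≤ (1 + |g ξ|) ^ (2 * n) := by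
      rw [pow_mul, ← sq_abs, ← pow_mul]
      gcongr; linarith
    have h5 : 0 ≤ g ξ ^ (2 * n) := by rw [pow_mul]; positivity
    calc ((2 * n + 1 : ℕ) : ℝ) * g ξ ^ (2 * n) * deriv g ξ
        ≤ ((2 * n + 1 : ℕ) : ℝ) * (1 + |g ξ|) ^ (2 * n) * (c₃ * (1 + |g ξ|)) := by
          have := h.deriv_nonneg ξ
          gcongr; linarith
      _ = ((2 * n + 1 : ℕ) : ℝ) * c₃ * (1 + |g ξ|) ^ (2 * n + 1) := by ring
      _ ≤ ((2 * n + 1 : ℕ) : ℝ) * c₃ * (exp c₃ * (1 + |g x|)) ^ (2 * n + 1) := by gcongr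
      _ = D x := by rw [hD, mul_pow]; push_cast; ring
  · intro w r k ha
    have h1 := hpoly |g w| (abs_nonneg _)
    have e1 : g w * g w ^ (2 * n + 1) = |g w| ^ (2 * n + 1 + 1) := by
      rw [← pow_succ', show 2 * n + 1 + 1 = 2 * (n + 1) by ring, pow_mul, pow_mul, sq_abs]
    have e2 : r * g w ^ (2 * n + 1) ≤ α * (|g w| + 1) * |g w| ^ (2 * n + 1) := by
      refine (le_abs_self _).trans ?_
      rw [abs_mul, abs_pow]
      have := ha.hra
      gcongr
    have e3 : D w * k ≤ A * (1 + |g w|) ^ (2 * n + 1) := by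
      have e : A * (1 + |g w|) ^ (2 * n + 1) = D w * d₀ := by
        rw [hA, hD, abs_of_pos hc3]; ring
      rw [e]
      have : 0 ≤ D w := by rw [hD]; positivity
      exact mul_le_mul_of_nonneg_left ha.hkd this
    have e4 : α * (|g w| + 1) * |g w| ^ (2 * n + 1) = α * |g w| ^ (2 * n + 1 + 1) + α * |g w| ^ (2 * n + 1) := by
      rw [pow_succ |g w| (2 * n + 1)]; ring
    simp only [hΦ]
    rw [show 2 * n + 2 = 2 * n + 1 + 1 by ring]
    rw [sub_mul, e1]
    linarith


/-- Boundedness on a set. -/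
def BddOn (S : Set ℝ) (f : ℝ → ℝ) : Prop := ∃ M, ∀ w ∈ S, |f w| ≤ M

namespace BddOn
variable {S : Set ℝ} {f h : ℝ → ℝ}
lemma const (c : ℝ) : BddOn S (fun _ => c) := ⟨|c|, fun _ _ => le_rfl⟩
lemma add (hf : BddOn S f) (hh : BddOn S h) : BddOn S (fun w => f w + h w) := by
  obtain ⟨M, hM⟩ := hf
  obtain ⟨N, hN⟩ := hh
  exact ⟨M + N, fun w hw => (abs_add_le _ _).trans (add_le_add (hM w hw) (hN w hw))⟩
lemma neg (hf : BddOn S f) : BddOn S (fun w => - f w) := by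
  obtain ⟨M, hM⟩ := hf
  exact ⟨M, fun w hw => by simpa using hM w hw⟩
lemma sub (hf : BddOn S f) (hh : BddOn S h) : BddOn S (fun w => f w - h w) := by
  simpa [sub_eq_add_neg] using hf.add hh.neg
lemma mul (hf : BddOn S f) (hh : BddOn S h) : BddOn S (fun w => f w * h w) := by
  obtain ⟨M, hM⟩ := hf
  obtain ⟨N, hN⟩ := hh
  refine ⟨M * N, fun w hw => ?_⟩
  rw [abs_mul]
  exact mul_le_mul (hM w hw) (hN w hw) (abs_nonneg _) ((abs_nonneg _).trans (hM w hw))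
lemma ite {p : ℝ → Prop} [DecidablePred p] (hf : BddOn S f) (hh : BddOn S h) :
    BddOn S (fun w => if p w then f w else h w) := by
  obtain ⟨M, hM⟩ := hf
  obtain ⟨N, hN⟩ := hh
  refine ⟨max M N, fun w hw => ?_⟩
  simp only
  split_ifs
  · exact le_max_of_le_left (hM w hw)
  · exact le_max_of_le_right (hN w hw)
lemma mono (hh : BddOn S h) (hle : ∀ w ∈ S, |f w| ≤ h w) : BddOn S f := by
  obtain ⟨N, hN⟩ := hh
  exact ⟨N, fun w hw => (hle w hw).trans ((le_abs_self _).trans (hN w hw))⟩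
lemma pow (hf : BddOn S f) (n : ℕ) : BddOn S (fun w => f w ^ n) := by
  obtain ⟨M, hM⟩ := hf
  refine ⟨M ^ n, fun w hw => ?_⟩
  rw [abs_pow]
  have := hM w hw
  gcongr
lemma three {k : ℝ → ℝ} (hf : BddOn S f) (hh : BddOn S h) (hk : BddOn S k) :
    ∃ M, ∀ w ∈ S, |f w| ≤ M ∧ |h w| ≤ M ∧ |k w| ≤ M := by
  obtain ⟨M, hM⟩ := hf
  obtain ⟨N, hN⟩ := hh
  obtain ⟨L, hL⟩ := hk
  exact ⟨max M (max N L), fun w hw => ⟨le_max_of_le_left (hM w hw),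
    le_max_of_le_right (le_max_of_le_left (hN w hw)), le_max_of_le_right (le_max_of_le_right (hL w hw))⟩⟩
lemma abs_g {g : ℝ → ℝ} {δ d₁ : ℝ} (hδ : 0 < δ) : BddOn {w | δ * |g w| ≤ d₁} (fun w => |g w|) :=
  ⟨d₁ / δ, fun w hw => by
    rw [abs_abs, le_div_iff₀ hδ]
    have : δ * |g w| ≤ d₁ := hw
    linarith⟩
lemma integrable {ν : Measure ℝ} [IsFiniteMeasure ν] (hf : BddOn S f) (hm : Measurable f)
    (hS : ∀ᵐ w ∂ν, w ∈ S) : Integrable f ν := by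
  obtain ⟨M, hM⟩ := hf
  exact integrable_of_bdd_ae hm M (by filter_upwards [hS] with w hw using hM w hw)
end BddOn

/-- Clamping to `[0, z]`. -/
noncomputable def cl (z w : ℝ) : ℝ := max 0 (min w z)

lemma cl_cont (z : ℝ) : Continuous (cl z) := by unfold cl; fun_prop
lemma cl_nonneg (z w : ℝ) : 0 ≤ cl z w := le_max_left _ _
lemma cl_le {z : ℝ} (hz : 0 ≤ z) (w : ℝ) : cl z w ≤ z := max_le hz (min_le_right _ _)
lemma cl_le_self {z w : ℝ} (hw : 0 ≤ w) : cl z w ≤ w := max_le hw (min_le_left _ _)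
lemma cl_of_nonpos {z w : ℝ} (hw : w ≤ 0) : cl z w = 0 :=
  max_eq_left ((min_le_left _ _).trans hw)
lemma cl_of_mem {z w : ℝ} (h0 : 0 ≤ w) (h1 : w ≤ z) : cl z w = w := by
  rw [cl, min_eq_left h1, max_eq_right h0]
lemma cl_of_ge {z w : ℝ} (hz : 0 ≤ z) (h1 : z ≤ w) : cl z w = z := by
  rw [cl, min_eq_right h1, max_eq_right hz]
lemma cl_lip (z x y : ℝ) : |cl z x - cl z y| ≤ |x - y| := by
  unfold cl
  have h1 : |max 0 (min x z) - max 0 (min y z)| ≤ |min x z - min y z| := by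
    have := abs_max_sub_max_le_max 0 (min x z) 0 (min y z)
    simpa using this
  have h2 : |min x z - min y z| ≤ |x - y| := by
    have := abs_min_sub_min_le_max x z y z
    simpa using this
  exact h1.trans h2

/-- The envelope `exp (G (cl w))`. -/
noncomputable def Bz (g : ℝ → ℝ) (z w : ℝ) : ℝ := exp (Gfun g (cl z w))

/-- Ratio of `1+g` beyond `z`. -/
noncomputable def rho (g : ℝ → ℝ) (z w : ℝ) : ℝ := (1 + g (max w z)) / (1 + g z)

/-- The test function for the tail bound. -/
noncomputable def ut (g : ℝ → ℝ) (κ z : ℝ) (m : ℕ) (w : ℝ) : ℝ :=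
  exp (Gfun g (cl z w) - κ * cl z w / z) * rho g z w ^ m

/-- Right derivative of the test function. -/
noncomputable def ut' (g : ℝ → ℝ) (κ z : ℝ) (m : ℕ) (w : ℝ) : ℝ :=
  if w < 0 then 0 else if w < z then (g w - κ / z) * ut g κ z m w
    else (m * deriv g w / (1 + g w)) * ut g κ z m w

namespace GG
variable {g : ℝ → ℝ} {c₁ c₃ : ℝ}

lemma Bz_cont (h : GG g c₁ c₃) (z : ℝ) : Continuous (Bz g z) := by
  have := h.contG
  have := cl_cont z
  unfold Bz; fun_prop

lemma one_le_Bz (h : GG g c₁ c₃) (z w : ℝ) : 1 ≤ Bz g z w := one_le_exp (h.G_nonneg _)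

lemma G_mono (h : GG g c₁ c₃) {x y : ℝ} (hx : 0 ≤ x) (hxy : x ≤ y) : Gfun g x ≤ Gfun g y := by
  have := h.G_tangent y x
  have := h.nonneg hx
  nlinarith

lemma Bz_le (h : GG g c₁ c₃) {z : ℝ} (hz : 0 ≤ z) (w : ℝ) : Bz g z w ≤ exp (Gfun g z) :=
  exp_le_exp.2 (h.G_mono (cl_nonneg _ _) (cl_le hz _))

lemma rho_cont (h : GG g c₁ c₃) {z : ℝ} : Continuous (rho g z) := by
  have := h.cont
  unfold rho; fun_prop

lemma one_le_rho (h : GG g c₁ c₃) {z : ℝ} (hz : 0 ≤ z) (w : ℝ) : 1 ≤ rho g z w := by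
  have h1 := h.nonneg hz
  rw [rho, one_le_div (by linarith)]
  have := h.mono (le_max_right w z)
  linarith

lemma rho_of_le (h : GG g c₁ c₃) {z w : ℝ} (hz : 0 ≤ z) (hw : w ≤ z) : rho g z w = 1 := by
  have h1 := h.nonneg hz
  rw [rho, max_eq_right hw, div_self (by linarith)]

lemma ut_cont (h : GG g c₁ c₃) (κ z : ℝ) (m : ℕ) : Continuous (ut g κ z m) := by
  have := h.contG
  have := cl_cont z
  have := h.rho_cont (z := z)
  unfold ut; fun_prop

lemma ut_pos (h : GG g c₁ c₃) {κ z : ℝ} (hz : 0 ≤ z) {m : ℕ} (w : ℝ) : 0 < ut g κ z m w := by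
  have := h.one_le_rho hz w
  unfold ut; positivity

lemma ut_bdd (h : GG g c₁ c₃) {κ z δ d₁ : ℝ} (hz : 0 ≤ z) (m : ℕ) (hδ : 0 < δ) :
    BddOn {w | δ * |g w| ≤ d₁} (ut g κ z m) := by
  unfold ut
  refine BddOn.mul ?_ (BddOn.pow ?_ m)
  · refine ⟨exp (Gfun g z + |κ * z / z| + |κ|), fun w _ => ?_⟩
    rw [abs_of_pos (exp_pos _)]
    gcongr
    have h1 := h.G_mono (cl_nonneg z w) (cl_le hz w)
    have h2 : |κ * cl z w / z| ≤ |κ| := by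
      rcases hz.eq_or_lt with rfl | hz'
      · simp
      rw [abs_div, abs_mul, abs_of_nonneg (cl_nonneg z w), abs_of_pos hz', div_le_iff₀ hz']
      have := cl_le hz w
      gcongr
    have := neg_abs_le (κ * cl z w / z)
    have := abs_nonneg (κ * z / z)
    linarith
  · refine BddOn.mono (((BddOn.const 1).add (BddOn.abs_g hδ)).add (BddOn.const (1 + g z))) fun w _ => ?_
    have h1 := h.nonneg hz
    have h3 := h.one_le_rho hz w
    rw [abs_of_pos (by linarith), rho]
    have h2 : 1 + g (max w z) ≤ 1 + |g w| + (1 + g z) := by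
      rcases le_total w z with hw | hw
      · rw [max_eq_right hw]; linarith [abs_nonneg (g w)]
      · rw [max_eq_left hw]; linarith [le_abs_self (g w)]
    refine (div_le_self ?_ (by linarith)).trans h2
    have := h.mono (le_max_right w z)
    linarith

lemma ut_deriv (h : GG g c₁ c₃) {κ z : ℝ} (hz : 0 < z) (m : ℕ) (w : ℝ) :
    HasDerivWithinAt (ut g κ z m) (ut' g κ z m w) (Set.Ici w) w := by
  unfold ut'
  split_ifs with h1 h2
  · have : ut g κ z m =ᶠ[nhds w] fun _ => 1 := by
      filter_upwards [gt_mem_nhds h1] with x hx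
      rw [ut, cl_of_nonpos (le_of_lt hx), h.rho_of_le hz.le (by linarith), G_zero]
      simp
    exact ((hasDerivAt_const w (1:ℝ)).congr_of_eventuallyEq this).hasDerivWithinAt
  · push Not at h1
    have e : ∀ x, 0 ≤ x → x < z → ut g κ z m x = exp (Gfun g x - κ * x / z) := by
      intro x hx hxz
      rw [ut, cl_of_mem hx hxz.le, h.rho_of_le hz.le hxz.le]; simp
    have hd : HasDerivAt (fun x => exp (Gfun g x - κ * x / z)) (exp (Gfun g w - κ * w / z) * (g w - κ * 1 / z)) w :=
      ((h.hasDerivAt_G w).sub (((hasDerivAt_id w).const_mul κ).div_const z)).exp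
    have hd2 := hd.hasDerivWithinAt (s := Set.Ici w)
    rw [e w h1 h2, mul_comm, ← mul_one κ, mul_one κ]
    rw [mul_one] at hd2
    refine hd2.congr_of_eventuallyEq ?_ (e w h1 h2)
    filter_upwards [self_mem_nhdsWithin, mem_nhdsWithin_of_mem_nhds (gt_mem_nhds h2)] with x hx hxz
    exact e x (h1.trans hx) hxz
  · push Not at h1 h2
    have hgz := h.nonneg hz.le
    have hgw := h.nonneg h1
    have e : ∀ x, z ≤ x → ut g κ z m x = exp (Gfun g z - κ * z / z) * ((1 + g x) / (1 + g z)) ^ m := by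
      intro x hx
      rw [ut, cl_of_ge hz.le hx, rho, max_eq_left hx]
    have hd : HasDerivAt (fun x => exp (Gfun g z - κ * z / z) * ((1 + g x) / (1 + g z)) ^ m)
      (exp (Gfun g z - κ * z / z) * (m * ((1 + g w) / (1 + g z)) ^ (m - 1) * (deriv g w / (1 + g z)))) w :=
      (((((h.diff w).hasDerivAt).const_add 1).div_const _).pow m).const_mul _
    have hd2 := hd.hasDerivWithinAt (s := Set.Ici w)
    refine (hd2.congr_of_eventuallyEq ?_ (e w h2)).congr_deriv ?_
    · filter_upwards [self_mem_nhdsWithin] with x hx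
      exact e x (h2.trans hx)
    · rw [e w h2]
      rcases m with _ | m
      · simp
      · have : (1 + g w) ≠ 0 := by linarith
        have : (1 + g z) ≠ 0 := by linarith
        simp only [Nat.add_sub_cancel, pow_succ]
        field_simp

/-- Ratio bound for the test function. -/
lemma ut_ratio (h : GG g c₁ c₃) {κ z δ : ℝ} (hz : 0 < z) (hκ : 0 ≤ κ) (hκz : κ ≤ z) (m : ℕ) (hδ : δ ≤ 1)
    {x ξ : ℝ} (hξ : 0 ≤ ξ) (hd : |ξ - x| ≤ δ) :
    ut g κ z m ξ ≤ exp ((exp c₃ + 1 + m * c₃) * (δ * (1 + |g x|))) * ut g κ z m x := by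
  have hδ0 : 0 ≤ δ := (abs_nonneg _).trans hd
  have hc3 := h.c₃pos
  have hcl := (cl_lip z ξ x).trans hd
  have h1 : Gfun g (cl z ξ) - Gfun g (cl z x) ≤ exp c₃ * (1 + |g x|) * δ := by
    refine (h.G_le _ _).trans ?_
    have a1 : g (cl z ξ) ≤ exp c₃ * (1 + |g x|) := by
      have := h.mono (cl_le_self (z := z) hξ)
      have := h.growth1 (hd.trans hδ)
      linarith [le_abs_self (g ξ)]
    have a2 := h.nonneg (cl_nonneg z ξ)
    have a3 : cl z ξ - cl z x ≤ δ := (le_abs_self _).trans hcl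
    calc g (cl z ξ) * (cl z ξ - cl z x) ≤ g (cl z ξ) * δ := by gcongr
      _ ≤ _ := by gcongr
  have h2 : -(κ * cl z ξ / z) + κ * cl z x / z ≤ δ := by
    have : -(κ * cl z ξ / z) + κ * cl z x / z = (κ / z) * (cl z x - cl z ξ) := by ring
    rw [this]
    have a1 : κ / z ≤ 1 := by rw [div_le_one hz]; exact hκz
    have a2 : 0 ≤ κ / z := by positivity
    have a3 : cl z x - cl z ξ ≤ δ := by
      rw [abs_sub_comm] at hcl
      exact (le_abs_self _).trans hcl
    nlinarith
  have h3 : rho g z ξ ≤ exp (c₃ * δ) * rho g z x := by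
    unfold rho
    have hgz := h.nonneg hz.le
    rw [← mul_div_assoc]
    gcongr
    have a1 := h.growth (max ξ z) (max x z)
    have p1 := h.nonneg (hz.le.trans (le_max_right ξ z))
    have p2 := h.nonneg (hz.le.trans (le_max_right x z))
    rw [abs_of_nonneg p1, abs_of_nonneg p2] at a1
    refine a1.trans ?_
    have a2 : |max ξ z - max x z| ≤ δ := by
      have := abs_max_sub_max_le_max ξ z x z
      simp only [sub_self, abs_zero] at this
      exact this.trans (max_le hd hδ0)
    gcongr
  have h4 : rho g z ξ ^ m ≤ exp (m * (c₃ * δ)) * rho g z x ^ m := by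
    have p := h.one_le_rho hz.le ξ
    rw [exp_nat_mul, ← mul_pow]
    gcongr
  unfold ut
  have hr := h.one_le_rho hz.le x
  calc _ ≤ exp ((exp c₃ * (1 + |g x|) * δ + δ) + (Gfun g (cl z x) - κ * cl z x / z)) *
        (exp (m * (c₃ * δ)) * rho g z x ^ m) := by
        have p := h.one_le_rho hz.le ξ
        gcongr
        linarith
    _ = exp (exp c₃ * (1 + |g x|) * δ + δ + m * (c₃ * δ)) *
        (exp (Gfun g (cl z x) - κ * cl z x / z) * rho g z x ^ m) := by
        simp only [exp_add]; ring
    _ ≤ _ := by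
        gcongr
        have : 0 ≤ (1 + m * c₃) * (δ * |g x|) := by positivity
        nlinarith

end GG


/-- Constants for the tail bound. -/
noncomputable def Lm (c₃ : ℝ) (m : ℕ) : ℝ := exp c₃ + 1 + m * c₃
noncomputable def Pm (c₃ : ℝ) (m : ℕ) (C₀ : ℝ) : ℝ := Lm c₃ m * exp (Lm c₃ m * C₀)
noncomputable def C1m (c₃ : ℝ) (m : ℕ) (C₀ : ℝ) : ℝ :=
  Pm c₃ m C₀ + c₃ * exp c₃ + c₃ * exp c₃ * Pm c₃ m C₀
noncomputable def qm (c₃ : ℝ) (m : ℕ) (C₀ : ℝ) : ℝ := exp (-(Lm c₃ m * (exp c₃ * C₀)))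

namespace GG
variable {g : ℝ → ℝ} {c₁ c₃ : ℝ}

lemma ut_le_exp (h : GG g c₁ c₃) {κ z : ℝ} (hz : 0 < z) (hκ : 0 ≤ κ) (m : ℕ) {a ξ : ℝ} (ha : 0 ≤ a) (hξ : ξ ≤ a) (haz : a ≤ z) :
    ut g κ z m ξ ≤ exp (a * exp (c₃ * a)) := by
  rw [ut, h.rho_of_le hz.le (hξ.trans haz), one_pow, mul_one]
  gcongr
  have h1 : cl z ξ ≤ a := max_le ha ((min_le_left _ _).trans hξ)
  have h2 := h.G_bound (a := a) (x := cl z ξ) (by rw [abs_of_nonneg (cl_nonneg _ _)]; exact h1)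
  have := cl_nonneg z ξ
  have : 0 ≤ κ * cl z ξ / z := by positivity
  linarith

lemma ut'_low (h : GG g c₁ c₃) {κ z : ℝ} (hz : 0 < z) (hκ : 0 ≤ κ) (m : ℕ) {a ξ : ℝ} (ha : 0 ≤ a) (hξ : ξ < a) (haz : a ≤ z) :
    ut' g κ z m ξ ≤ exp (c₃ * a) * exp (a * exp (c₃ * a)) := by
  unfold ut'
  rw [if_pos (hξ.trans_le haz)]
  split_ifs with h1
  · positivity
  · push Not at h1
    have u0 := h.ut_pos (κ := κ) hz.le (m := m) ξ
    have u1 := h.ut_le_exp hz hκ m ha hξ.le haz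
    have h2 := h.growth0 (a := a) (x := ξ) (by rw [abs_of_nonneg h1]; exact hξ.le)
    have h3 : 0 ≤ κ / z := by positivity
    have h4 : g ξ - κ / z ≤ exp (c₃ * a) := by linarith [le_abs_self (g ξ)]
    calc _ ≤ exp (c₃ * a) * ut g κ z m ξ := by gcongr
      _ ≤ _ := by gcongr

lemma logder_le (h : GG g c₁ c₃) {z ξ : ℝ} (hz : 0 < z) (hξ : z ≤ ξ) (m : ℕ) :
    m * deriv g ξ / (1 + g ξ) ≤ m * c₃ / z := by
  have h0 := h.nonneg (hz.le.trans hξ)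
  have hc := h.c₃pos
  have h1 := h.db ξ
  rw [abs_of_nonneg h0, abs_of_nonneg (hz.le.trans hξ)] at h1
  have h2 : deriv g ξ ≤ c₃ * (1 + g ξ) / z := by
    refine ((le_abs_self _).trans h1).trans ?_
    gcongr
    linarith
  rw [div_le_iff₀ (by linarith)]
  calc m * deriv g ξ ≤ m * (c₃ * (1 + g ξ) / z) := by gcongr
    _ = _ := by ring

lemma ut'_high (h : GG g c₁ c₃) {κ z : ℝ} (hz : 0 < z) (m : ℕ) {x ξ : ℝ} (hx : z ≤ x) (hξ : z ≤ ξ)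
    (hd : |ξ - x| ≤ 1) :
    ut' g κ z m ξ ≤ (m * c₃ * exp (m * c₃) / z) * ut g κ z m x := by
  unfold ut'
  rw [if_neg (by linarith), if_neg (by linarith)]
  have u0 := h.ut_pos (κ := κ) hz.le (m := m) ξ
  have hc := h.c₃pos
  have h1 := h.logder_le hz hξ m
  have h2 : ut g κ z m ξ ≤ exp (m * c₃) * ut g κ z m x := by
    unfold ut
    rw [cl_of_ge hz.le hx, cl_of_ge hz.le hξ]
    have h3 : rho g z ξ ≤ exp c₃ * rho g z x := by
      unfold rho
      rw [max_eq_left hx, max_eq_left hξ, ← mul_div_assoc]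
      have hgz := h.nonneg hz.le
      have a1 := h.growth1 hd
      rw [abs_of_nonneg (h.nonneg (hz.le.trans hx)), abs_of_nonneg (h.nonneg (hz.le.trans hξ))] at a1
      gcongr
    have p := h.one_le_rho hz.le ξ
    calc _ ≤ exp (Gfun g z - κ * z / z) * (exp c₃ * rho g z x) ^ m := by gcongr
      _ = _ := by rw [mul_pow, exp_nat_mul]; ring
  calc _ ≤ m * c₃ / z * (exp (m * c₃) * ut g κ z m x) := by gcongr
    _ = _ := by ring

lemma ut'_mid (h : GG g c₁ c₃) {κ z δ C₀ : ℝ} (hz : 0 < z) (hκ : 0 ≤ κ) (hκz : κ ≤ z) (m : ℕ) (hδ1 : δ ≤ 1)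
    {x ξ : ℝ} (hx : 1 ≤ x) (hd : |ξ - x| ≤ δ) (hC₀ : δ * (1 + g x) ≤ C₀)
    (hzg : ∀ y, z ≤ y → m * c₃ / z ≤ g y - κ / z) :
    ut' g κ z m ξ ≤ (g x + C1m c₃ m C₀ * (δ * (1 + g x) ^ 2) - qm c₃ m C₀ * κ / z) * ut g κ z m x := by
  have hδ0 : 0 ≤ δ := (abs_nonneg _).trans hd
  have hξ0 : 0 ≤ ξ := by linarith [(abs_le.1 hd).1]
  have hgx := h.nonneg (show 0 ≤ x by linarith)
  have hgξ := h.nonneg hξ0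
  have hc := h.c₃pos
  have uξ := h.ut_pos (κ := κ) hz.le (m := m) ξ
  have ux := h.ut_pos (κ := κ) hz.le (m := m) x
  have hL : 0 < Lm c₃ m := by unfold Lm; positivity
  have hP : 0 < Pm c₃ m C₀ := by unfold Pm; positivity
  have h1 : ut' g κ z m ξ ≤ (g ξ - κ / z) * ut g κ z m ξ := by
    unfold ut'
    rw [if_neg (by linarith)]
    split_ifs with h2
    · exact le_rfl
    · push Not at h2
      gcongr
      exact (h.logder_le hz h2 m).trans (hzg ξ h2)
  set s := δ * (1 + g x) with hs
  have hs0 : 0 ≤ s := by positivity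
  have h2 : ut g κ z m ξ ≤ (1 + Pm c₃ m C₀ * s) * ut g κ z m x := by
    have r := h.ut_ratio hz hκ hκz m hδ1 hξ0 hd
    rw [abs_of_nonneg hgx] at r
    refine r.trans ?_
    gcongr
    have : exp (Lm c₃ m * s) ≤ 1 + Lm c₃ m * s * exp (Lm c₃ m * s) := by
      have := add_one_le_exp (-(Lm c₃ m * s))
      have e : exp (-(Lm c₃ m * s)) * exp (Lm c₃ m * s) = 1 := by rw [← exp_add]; simp
      have := exp_pos (Lm c₃ m * s)
      nlinarith
    refine this.trans ?_
    have : Lm c₃ m * s * exp (Lm c₃ m * s) ≤ Lm c₃ m * s * exp (Lm c₃ m * C₀) := by gcongr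
    unfold Pm
    linarith
  have h3 : qm c₃ m C₀ * ut g κ z m x ≤ ut g κ z m ξ := by
    have r := h.ut_ratio hz hκ hκz m hδ1 (x := ξ) (ξ := x) (by linarith) (by rw [abs_sub_comm]; exact hd)
    rw [abs_of_nonneg hgξ] at r
    have g1 := h.growth1 (hd.trans hδ1)
    rw [abs_of_nonneg hgξ, abs_of_nonneg hgx] at g1
    have a : δ * (1 + g ξ) ≤ exp c₃ * C₀ := by
      calc δ * (1 + g ξ) ≤ δ * (exp c₃ * (1 + g x)) := by gcongr
        _ = exp c₃ * s := by rw [hs]; ring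
        _ ≤ _ := by gcongr
    have r2 : ut g κ z m x ≤ exp (Lm c₃ m * (exp c₃ * C₀)) * ut g κ z m ξ := by
      refine r.trans ?_
      change exp (Lm c₃ m * _) * _ ≤ _
      gcongr
    unfold qm
    rw [exp_neg, inv_mul_le_iff₀ (exp_pos _)]
    exact r2
  have h4 : g ξ ≤ g x + c₃ * exp c₃ * s := by
    have := h.lip (hd.trans hδ1)
    rw [abs_of_nonneg hgx] at this
    have h5 : c₃ * exp c₃ * (1 + g x) * |ξ - x| ≤ c₃ * exp c₃ * (1 + g x) * δ := by gcongr
    have := (le_abs_self _).trans this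
    rw [hs]; linarith
  have hκz0 : 0 ≤ κ / z := by positivity
  calc ut' g κ z m ξ ≤ g ξ * ut g κ z m ξ - κ / z * ut g κ z m ξ := by linarith
    _ ≤ (g x + c₃ * exp c₃ * s) * ((1 + Pm c₃ m C₀ * s) * ut g κ z m x) - κ / z * (qm c₃ m C₀ * ut g κ z m x) := by
      gcongr
    _ = ((g x + c₃ * exp c₃ * s) * (1 + Pm c₃ m C₀ * s) - qm c₃ m C₀ * κ / z) * ut g κ z m x := by ring
    _ ≤ _ := by
      gcongr
      have e1 : δ * (1 + g x) ^ 2 = s * (1 + g x) := by rw [hs]; ring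
      rw [e1]
      unfold C1m
      have b1 : s ≤ 1 + g x := by rw [hs]; nlinarith
      have b2 : s * s ≤ s * (1 + g x) := by gcongr
      have b3 : s ≤ s * (1 + g x) := by nlinarith
      have b4 : 0 ≤ c₃ * exp c₃ := by positivity
      have b5 : 0 ≤ c₃ * exp c₃ * Pm c₃ m C₀ := by positivity
      nlinarith [mul_le_mul_of_nonneg_left b2 b5, mul_le_mul_of_nonneg_left b3 b4, mul_nonneg hP.le hs0]

end GG


lemma rpow_add_one_le {G τ : ℝ} (hG : 0 ≤ G) (hτ : 0 < τ) : G ^ τ + 1 ≤ 2 * (1 + G) ^ τ := by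
  have h1 : G ^ τ ≤ (1 + G) ^ τ := rpow_le_rpow hG (by linarith) hτ.le
  have h2 : (1:ℝ) ≤ (1 + G) ^ τ := one_le_rpow (by linarith) hτ.le
  linarith

lemma scaled_pow {x X b y z τ : ℝ} (hx : 0 ≤ x) (hX : 0 ≤ X) (hb : 0 ≤ b) (hy : 0 ≤ y) (hz : 0 < z) (hτ : 0 ≤ τ)
    (hXb : X ≤ b * y) (hc : x * z * y ^ τ ≤ 1) : x * X ^ τ ≤ b ^ τ / z := by
  rw [le_div_iff₀ hz]
  have h1 : X ^ τ ≤ b ^ τ * y ^ τ := by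
    rw [← mul_rpow hb hy]
    exact rpow_le_rpow hX hXb hτ
  have h2 : 0 ≤ b ^ τ := rpow_nonneg hb _
  calc x * X ^ τ * z ≤ x * (b ^ τ * y ^ τ) * z := by gcongr
    _ = b ^ τ * (x * z * y ^ τ) := by ring
    _ ≤ b ^ τ * 1 := by gcongr
    _ = _ := by ring

lemma phi_mid {G r k δ δ₁ δ₂ τ₁ τ₂ C₀ C₁ C₂ b gz z A : ℝ} (hG : 0 ≤ G) (hτ₁ : 0 < τ₁) (hτ₂ : 0 < τ₂)
    (hδ : 0 ≤ δ) (hδ₁ : 0 ≤ δ₁) (hδ₂ : 0 ≤ δ₂) (hC₁ : 0 ≤ C₁) (hC₂ : C₂ = 1 + C₁ * C₀)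
    (hk1 : |k - 1| ≤ δ₁ * (G ^ τ₁ + 1)) (hr : |r| ≤ δ₂ * (G ^ τ₂ + 1))
    (hb : 0 ≤ b) (hgz : 0 ≤ gz) (hz : 0 < z) (hX : 1 + G ≤ b * gz) (hC₀ : δ * (1 + G) ≤ C₀)
    (hA0 : 0 ≤ A) (hA : A / z ≤ 1) (hAe : 1 + C₁ * b ^ 2 + 2 * C₂ * b ^ (τ₁ + 1) + 2 * b ^ τ₂ ≤ A)
    (h1 : δ * z * gz ^ 2 ≤ 1) (h2 : δ₁ * z * gz ^ (τ₁ + 1) ≤ 1) (h3 : δ₂ * z * gz ^ τ₂ ≤ 1) :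
    1 / z ≤ (G - r) - (G + C₁ * (δ * (1 + G) ^ 2) - A / z) * k := by
  set X := 1 + G with hXd
  have hX0 : 0 < X := by linarith
  have hC₀0 : 0 ≤ C₀ := le_trans (by positivity) hC₀
  have hC₂0 : 0 ≤ C₂ := by rw [hC₂]; positivity
  have a1 : δ * X ^ 2 ≤ b ^ 2 / z := by
    have := scaled_pow (τ := 2) hδ hX0.le hb hgz hz (by norm_num) hX (by simpa using h1)
    simpa using this
  have a2 := scaled_pow (τ := τ₁ + 1) hδ₁ hX0.le hb hgz hz (by linarith) hX h2
  have a3 := scaled_pow (τ := τ₂) hδ₂ hX0.le hb hgz hz hτ₂.le hX h3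
  have b1 : |r| ≤ 2 * (b ^ τ₂ / z) := by
    have := mul_le_mul_of_nonneg_left (rpow_add_one_le hG hτ₂) hδ₂
    linarith
  have hAz : 0 ≤ A / z := by positivity
  have hD : |G + C₁ * (δ * X ^ 2) - A / z| ≤ C₂ * X := by
    have e : C₁ * (δ * X ^ 2) ≤ C₁ * (C₀ * X) := by
      have e' : δ * X ^ 2 ≤ C₀ * X := by nlinarith
      exact mul_le_mul_of_nonneg_left e' hC₁
    have e0 : 0 ≤ C₁ * (δ * X ^ 2) := by positivity
    have e2 : 0 ≤ C₁ * (C₀ * X) := by positivity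
    rw [abs_le, hC₂]
    constructor <;> nlinarith
  have b2 : (G + C₁ * (δ * X ^ 2) - A / z) * (k - 1) ≤ 2 * C₂ * (b ^ (τ₁ + 1) / z) := by
    calc _ ≤ |(G + C₁ * (δ * X ^ 2) - A / z) * (k - 1)| := le_abs_self _
      _ = |G + C₁ * (δ * X ^ 2) - A / z| * |k - 1| := abs_mul _ _
      _ ≤ C₂ * X * (δ₁ * (2 * X ^ τ₁)) := by
        gcongr
        refine hk1.trans ?_
        gcongr
        exact rpow_add_one_le hG hτ₁
      _ = 2 * C₂ * (δ₁ * X ^ (τ₁ + 1)) := by rw [rpow_add hX0, rpow_one]; ring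
      _ ≤ _ := by gcongr
  have b3 : C₁ * (δ * X ^ 2) ≤ C₁ * (b ^ 2 / z) := by gcongr
  have b4 : (1 + C₁ * b ^ 2 + 2 * C₂ * b ^ (τ₁ + 1) + 2 * b ^ τ₂) / z ≤ A / z := by gcongr
  have b5 : (1 + C₁ * b ^ 2 + 2 * C₂ * b ^ (τ₁ + 1) + 2 * b ^ τ₂) / z =
    1 / z + C₁ * (b ^ 2 / z) + 2 * C₂ * (b ^ (τ₁ + 1) / z) + 2 * (b ^ τ₂ / z) := by ring
  have b6 := le_abs_self r
  nlinarith

lemma r_bound {G r α δ₂ τ₂ γ : ℝ} (hα0 : 0 ≤ α) (hα1 : α < 1) (hτ₂ : 0 < τ₂) (hγ : 0 < γ) (hG : γ ≤ G) (hδ₂ : 0 ≤ δ₂)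
    (hη : δ₂ * ((2 * α / (1 - α)) ^ τ₂ + 1) ≤ γ / 2)
    (hr2 : |r| ≤ δ₂ * (G ^ τ₂ + 1)) (hra : |r| ≤ α * (G + 1)) : |r| ≤ (1 + α) / 2 * G := by
  have hβ : 0 < 1 - α := by linarith
  rcases le_total (2 * α / (1 - α)) G with h | h
  · rw [div_le_iff₀ hβ] at h
    nlinarith
  · have : G ^ τ₂ ≤ (2 * α / (1 - α)) ^ τ₂ := rpow_le_rpow (by linarith) h hτ₂.le
    have : δ₂ * (G ^ τ₂ + 1) ≤ δ₂ * ((2 * α / (1 - α)) ^ τ₂ + 1) := by gcongr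
    nlinarith

set_option maxHeartbeats 1600000 in
lemma tail_core {g : ℝ → ℝ} {c₁ c₃ : ℝ} (h : GG g c₁ c₃) (ν : Measure ℝ) [IsProbabilityMeasure ν] (n : ℕ)
    {δ δ₁ δ₂ τ₁ τ₂ d₀ d₁ α κ z C₀ C₁ C₂ C₄ C₅ b : ℝ}
    (hd₀ : 1 ≤ d₀) (hα0 : 0 ≤ α) (hα1 : α < 1) (hτ₁ : 0 < τ₁) (hτ₂ : 0 < τ₂)
    (hδ : 0 < δ) (hδ1 : δ ≤ 1) (hδ₁ : 0 ≤ δ₁) (hδ₂ : 0 ≤ δ₂)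
    (hae : ∀ᵐ w ∂ν, δ * |g w| ≤ d₁) (hI : IneqProp ν g δ δ₁ δ₂ τ₁ τ₂ d₀ d₁ α)
    (hη : δ₂ * ((2 * α / (1 - α)) ^ τ₂ + 1) ≤ g0 c₁ / 2)
    (h1 : δ * z * g z ^ 2 ≤ 1) (h2 : δ₁ * z * g z ^ (τ₁ + 1) ≤ 1) (h3 : δ₂ * z * g z ^ τ₂ ≤ 1)
    (hbe : b = exp c₃ * (1 + 1 / g0 c₁)) (hC₀e : C₀ = b / g0 c₁) (hC₁e : C₁ = C1m c₃ (2 * n + 2) C₀)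
    (hC₂e : C₂ = 1 + C₁ * C₀) (hκ : 0 ≤ κ)
    (hκe : 1 + C₁ * b ^ 2 + 2 * C₂ * b ^ (τ₁ + 1) + 2 * b ^ τ₂ ≤ qm c₃ (2 * n + 2) C₀ * κ)
    (hC₄e : C₄ = (2 * n + 2 : ℕ) * c₃ * exp ((2 * n + 2 : ℕ) * c₃))
    (hC₅e : C₅ = exp (c₃ * (w0 c₁ + 1)) * exp ((w0 c₁ + 1) * exp (c₃ * (w0 c₁ + 1))))
    (hz1 : κ ≤ z) (hz2 : w0 c₁ + 1 ≤ z) (hz3 : (2 * n + 2 : ℕ) * c₃ + κ ≤ g0 c₁ * z)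
    (hz4 : C₄ * d₀ + 1 ≤ (1 - α) / 2 * g0 c₁ * z) :
    ∫ w, (if w0 c₁ ≤ w then ut g κ z (2 * n + 2) w else 0) ∂ν ≤
      z * (C₅ * (2 + d₀)) * ∫ w, (1 + |g w|) ^ (2 * n + 2) ∂ν := by
  set m : ℕ := 2 * n + 2 with hm
  have hc := h.c₃pos
  have hw0 := one_le_w0 c₁
  have hg0 := g0_pos (c₁ := c₁) h.c₁pos
  have hz : 0 < z := by linarith
  have hgzl := h.lower (w := z) (by linarith)
  have hgz : 0 < g z := hg0.trans_le hgzl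
  have hb : 0 < b := by rw [hbe]; positivity
  have hC₀ : 0 < C₀ := by rw [hC₀e]; positivity
  have hLm : 0 < Lm c₃ m := by unfold Lm; positivity
  have hPm : 0 < Pm c₃ m C₀ := by unfold Pm; positivity
  have hC₁ : 0 < C₁ := by rw [hC₁e]; unfold C1m; positivity
  have hC₂ : 0 < C₂ := by rw [hC₂e]; positivity
  have hC₄ : 0 ≤ C₄ := by rw [hC₄e]; positivity
  have hC₅ : 1 ≤ C₅ := by
    rw [hC₅e]
    have a1 : 1 ≤ exp (c₃ * (w0 c₁ + 1)) := one_le_exp (by positivity)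
    have a2 : 1 ≤ exp ((w0 c₁ + 1) * exp (c₃ * (w0 c₁ + 1))) := one_le_exp (by positivity)
    exact one_le_mul_of_one_le_of_one_le a1 a2
  have hq : qm c₃ m C₀ ≤ 1 := by
    unfold qm
    exact exp_le_one_iff.2 (by have : 0 < Lm c₃ m * (exp c₃ * C₀) := by positivity
                               linarith)
  have hq0 : 0 < qm c₃ m C₀ := exp_pos _
  have hqκ0 : 0 ≤ qm c₃ m C₀ * κ := by positivity
  have hqκ : qm c₃ m C₀ * κ / z ≤ 1 := by
    rw [div_le_one hz]; exact (mul_le_of_le_one_left hκ hq).trans hz1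
  -- middle zone
  have hmidX : ∀ x, w0 c₁ ≤ x → x ≤ z + δ → 1 + g x ≤ b * g z := by
    intro x hx1 hx2
    have a1 : 1 + g x ≤ exp c₃ * (1 + g z) := by
      rcases le_total x z with hxz | hxz
      · have a3 := h.mono hxz
        have a4 := one_le_exp hc.le
        calc 1 + g x ≤ 1 * (1 + g z) := by linarith
          _ ≤ _ := by gcongr
      · have := h.growth1 (x := x) (y := z) (by rw [abs_of_nonneg (by linarith)]; linarith)
        rwa [abs_of_nonneg (h.nonneg (by linarith)), abs_of_pos hgz] at this
    have a2 : 1 ≤ 1 / g0 c₁ * g z := by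
      rw [div_mul_eq_mul_div, one_mul, one_le_div hg0]; exact hgzl
    calc _ ≤ exp c₃ * (1 + g z) := a1
      _ ≤ exp c₃ * (1 / g0 c₁ * g z + g z) := by gcongr
      _ = _ := by rw [hbe]; ring
  have hδgz : δ * g z ≤ 1 / g0 c₁ := by
    rw [le_div_iff₀ hg0]
    have a1 : δ * g z * g0 c₁ ≤ δ * g z * g z := by gcongr
    have a2 : δ * g z ^ 2 * 1 ≤ δ * g z ^ 2 * z := by gcongr; linarith
    have a3 : δ * g z * g z = δ * g z ^ 2 * 1 := by ring
    have a4 : δ * g z ^ 2 * z = δ * z * g z ^ 2 := by ring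
    linarith
  have hmidC : ∀ x, w0 c₁ ≤ x → x ≤ z + δ → δ * (1 + g x) ≤ C₀ := by
    intro x hx1 hx2
    calc δ * (1 + g x) ≤ δ * (b * g z) := by gcongr; exact hmidX x hx1 hx2
      _ = b * (δ * g z) := by ring
      _ ≤ b * (1 / g0 c₁) := by gcongr
      _ = C₀ := by rw [hC₀e]; ring
  have hzg : ∀ y, z ≤ y → m * c₃ / z ≤ g y - κ / z := by
    intro y hy
    have := h.mono hy
    have : m * c₃ / z + κ / z ≤ g0 c₁ := by
      rw [← add_div, div_le_iff₀ hz]; exact hz3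
    linarith
  set u := ut g κ z m with hu
  have hucont : Continuous u := h.ut_cont κ z m
  have hupos : ∀ w, 0 < u w := fun w => h.ut_pos hz.le w
  set D : ℝ → ℝ := fun x => if x < w0 c₁ then C₅ else if x ≤ z + δ then
      (g x + C₁ * (δ * (1 + g x) ^ 2) - qm c₃ m C₀ * κ / z) * u x else (C₄ / z) * u x with hDdef
  set Φ : ℝ → ℝ := fun w => (if w0 c₁ ≤ w then u w / z else 0) - C₅ * (2 + d₀) * (1 + |g w|) ^ m with hΦdef
  have hgm := h.meas
  have hum := hucont.measurable
  have hDm : Measurable D := by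
    refine Measurable.ite measurableSet_Iio measurable_const (Measurable.ite measurableSet_Iic ?_ ?_) <;> fun_prop
  have hindm : Measurable (fun w => if w0 c₁ ≤ w then u w / z else 0) :=
    Measurable.ite measurableSet_Ici (by fun_prop) measurable_const
  have hpm : Measurable (fun w => (1 + |g w|) ^ m) := by fun_prop
  have hΦm : Measurable Φ := hindm.sub (hpm.const_mul _)
  have hub : BddOn {w | δ * |g w| ≤ d₁} u := h.ut_bdd hz.le m hδ
  have hgb : BddOn {w | δ * |g w| ≤ d₁} (fun w => |g w|) := BddOn.abs_g hδ
  have hgb' : BddOn {w | δ * |g w| ≤ d₁} g := hgb.mono fun w _ => le_rfl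
  have hindb : BddOn {w | δ * |g w| ≤ d₁} (fun w => if w0 c₁ ≤ w then u w / z else 0) :=
    BddOn.ite (by simpa [div_eq_mul_inv] using hub.mul (BddOn.const z⁻¹)) (BddOn.const 0)
  have hpb : BddOn {w | δ * |g w| ≤ d₁} (fun w => (1 + |g w|) ^ m) := ((BddOn.const 1).add hgb).pow m
  have hΦb : BddOn {w | δ * |g w| ≤ d₁} Φ := hindb.sub ((BddOn.const _).mul hpb)
  have hDb : BddOn {w | δ * |g w| ≤ d₁} D := by
    refine BddOn.ite (BddOn.const _) (BddOn.ite ?_ ((BddOn.const _).mul hub))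
    exact ((hgb'.add ((BddOn.const _).mul ((BddOn.const _).mul (((BddOn.const 1).add hgb').pow 2)))).sub
      (BddOn.const _)).mul hub
  have key : ∫ w, Φ w ∂ν ≤ 0 := by
    refine hI u D Φ hum hDm hΦm (BddOn.three hub hDb hΦb) ?_ ?_
    · intro x y hxy
      refine slope_le hucont (fun t => h.ut_deriv hz m t) fun ξ hξ => ?_
      have hd : |ξ - x| ≤ δ := by
        have := Set.abs_sub_left_of_mem_uIcc hξ
        rw [abs_sub_comm y x] at this
        exact this.trans hxy
      have hd' := abs_le.1 hd
      simp only [hDdef]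
      split_ifs with c1 c2
      · rw [hC₅e]
        exact h.ut'_low hz hκ m (by linarith) (by linarith) hz2
      · push Not at c1
        rw [hC₁e]
        exact h.ut'_mid hz hκ hz1 m hδ1 (by linarith) hd (hmidC x c1 c2) hzg
      · push Not at c1 c2
        rw [hC₄e]
        exact h.ut'_high hz m (by linarith) (by linarith) (hd.trans hδ1)
    · intro w r k hA
      have hk0 := hA.hk0
      have hkd := hA.hkd
      have hX1 : 1 ≤ 1 + |g w| := by linarith [abs_nonneg (g w)]
      have hpos : 0 ≤ C₅ * (2 + d₀) * (1 + |g w|) ^ m := by positivity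
      have huw := hupos w
      simp only [hΦdef, hDdef]
      rcases lt_or_ge w (w0 c₁) with c1 | c1
      · rw [if_neg (by linarith), if_pos c1]
        have u1 : u w ≤ C₅ := by
          have := h.ut_le_exp hz hκ m (a := w0 c₁ + 1) (ξ := w) (by linarith) (by linarith) hz2
          refine this.trans ?_
          rw [hC₅e]
          exact le_mul_of_one_le_left (exp_pos _).le (one_le_exp (by positivity))
        have e1 : |(g w - r) * u w| ≤ 2 * (1 + |g w|) * C₅ := by
          rw [abs_mul, abs_of_pos huw]
          have : |g w - r| ≤ 2 * (1 + |g w|) := by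
            have := abs_sub (g w) r
            have a3 := hA.hra
            have a4 : α * (|g w| + 1) ≤ 1 * (|g w| + 1) := by gcongr
            linarith
          gcongr
        have e2 : C₅ * k ≤ C₅ * d₀ := by gcongr
        have e3 : 1 + |g w| ≤ (1 + |g w|) ^ m := le_self_pow₀ hX1 (by omega)
        have e4 := neg_abs_le ((g w - r) * u w)
        have e5 : C₅ * (2 + d₀) * (1 + |g w|) ≤ C₅ * (2 + d₀) * (1 + |g w|) ^ m := by gcongr
        have e6 : 0 ≤ C₅ * d₀ * |g w| := by positivity
        have e7 : C₅ * (2 + d₀) * (1 + |g w|) = 2 * (1 + |g w|) * C₅ + C₅ * d₀ + C₅ * d₀ * |g w| := by ring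
        linarith
      · rw [if_pos c1, if_neg (by linarith)]
        have hgw0 : 0 ≤ g w := h.nonneg (by linarith)
        have habs := abs_of_nonneg hgw0
        split_ifs with c2
        · have hk1 := hA.hk1
          have hr2 := hA.hr2
          rw [habs] at hk1 hr2
          have := phi_mid (G := g w) (r := r) (k := k) hgw0 hτ₁ hτ₂ hδ.le hδ₁ hδ₂ hC₁.le hC₂e hk1 hr2 hb.le hgz.le hz
            (hmidX w c1 c2) (hmidC w c1 c2) hqκ0 hqκ hκe h1 h2 h3
          have := mul_le_mul_of_nonneg_right this huw.le
          have e : 1 / z * u w = u w / z := by ring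
          rw [e, sub_mul] at this
          refine le_trans (by linarith) (this.trans (le_of_eq (by ring)))
        · have hr2 := hA.hr2
          have hra := hA.hra
          rw [habs] at hr2 hra
          have hr := r_bound hα0 hα1 hτ₂ hg0 (h.lower c1) hδ₂ hη hr2 hra
          have e1 : (C₄ * d₀ + 1) / z ≤ (1 - α) / 2 * g0 c₁ := by
            rw [div_le_iff₀ hz]; exact hz4
          have e2 : (1 - α) / 2 * g0 c₁ ≤ (1 - α) / 2 * g w := by
            have := h.lower c1
            have : 0 < (1 - α) / 2 := by linarith
            gcongr
          have e3 : C₄ / z * k ≤ C₄ / z * d₀ := by gcongr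
          have e4 : 1 / z ≤ (g w - r) - C₄ / z * k := by
            have := le_abs_self r
            have e5 : (C₄ * d₀ + 1) / z = C₄ / z * d₀ + 1 / z := by ring
            linarith
          have := mul_le_mul_of_nonneg_right e4 huw.le
          have e : 1 / z * u w = u w / z := by ring
          rw [e, sub_mul] at this
          refine le_trans (by linarith) (this.trans (le_of_eq (by ring)))
  have hS : ∀ᵐ w ∂ν, w ∈ {w | δ * |g w| ≤ d₁} := hae
  have i1 := hindb.integrable hindm hS
  have i2 := hpb.integrable hpm hS
  have e : ∫ w, Φ w ∂ν = ∫ w, (if w0 c₁ ≤ w then u w / z else 0) ∂ν - C₅ * (2 + d₀) * ∫ w, (1 + |g w|) ^ m ∂ν := by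
    rw [← integral_const_mul]
    exact integral_sub i1 (i2.const_mul _)
  have e2 : ∫ w, (if w0 c₁ ≤ w then u w / z else 0) ∂ν = (∫ w, (if w0 c₁ ≤ w then u w else 0) ∂ν) / z := by
    rw [← integral_div]
    congr 1
    ext w
    split_ifs <;> simp
  rw [e, e2] at key
  have : (∫ w, (if w0 c₁ ≤ w then u w else 0) ∂ν) / z ≤ C₅ * (2 + d₀) * ∫ w, (1 + |g w|) ^ m ∂ν := by linarith
  rw [div_le_iff₀ hz] at this
  linarith


lemma master (n : ℕ) (c₁ c₃ d₀ τ₁ τ₂ α : ℝ) (hc₁ : 0 < c₁) (hc₃ : 1 ≤ c₃) (hd₀ : 1 ≤ d₀) (hα0 : 0 ≤ α) (hα1 : α < 1)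
    (hτ₁ : 0 < τ₁) (hτ₂ : 0 < τ₂) :
    ∃ η₀ C : ℝ, 0 < η₀ ∧ η₀ ≤ 1 ∧ 0 < C ∧ ∀ (g : ℝ → ℝ) (ν : Measure ℝ) (δ δ₁ δ₂ d₁ : ℝ), GG g c₁ c₃ →
      IsProbabilityMeasure ν → 0 < δ → δ ≤ η₀ → 0 ≤ δ₁ → 0 ≤ δ₂ → δ₂ ≤ η₀ → (∀ᵐ w ∂ν, δ * |g w| ≤ d₁) →
      IneqProp ν g δ δ₁ δ₂ τ₁ τ₂ d₀ d₁ α → ∀ z : ℝ, 0 ≤ z →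
      δ * z * g z ^ 2 ≤ 1 → δ₁ * z * g z ^ (τ₁ + 1) ≤ 1 → δ₂ * z * g z ^ τ₂ ≤ 1 →
      ∀ k : ℝ, 0 ≤ k → k ≤ (2 * n + 2 : ℕ) →
      ∫ w, (1 + |g w|) ^ k * Bz g z w ∂ν ≤ C * (1 + z) * (1 + g z) ^ k := by
  obtain ⟨Cm, hCm, hmom⟩ := moment_bound n c₁ c₃ d₀ α hd₀ hα0 hα1
  have hc : 0 < c₃ := by linarith
  have hw0 := one_le_w0 c₁
  have hg0 := g0_pos (c₁ := c₁) hc₁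
  have hβ : 0 < 1 - α := by linarith
  set b := exp c₃ * (1 + 1 / g0 c₁) with hbe
  set C₀ := b / g0 c₁ with hC₀e
  set C₁ := C1m c₃ (2 * n + 2) C₀ with hC₁e
  set C₂ := 1 + C₁ * C₀ with hC₂e
  have hb : 0 < b := by positivity
  have hC₀ : 0 < C₀ := by positivity
  have hLm : 0 < Lm c₃ (2 * n + 2) := by unfold Lm; positivity
  have hPm : 0 < Pm c₃ (2 * n + 2) C₀ := by unfold Pm; positivity
  have hC₁ : 0 < C₁ := by rw [hC₁e]; unfold C1m; positivity
  have hC₂ : 0 < C₂ := by positivity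
  have hq0 : 0 < qm c₃ (2 * n + 2) C₀ := exp_pos _
  set κ := (1 + C₁ * b ^ 2 + 2 * C₂ * b ^ (τ₁ + 1) + 2 * b ^ τ₂) / qm c₃ (2 * n + 2) C₀ with hκd
  have hκ : 0 < κ := by positivity
  have hκe : 1 + C₁ * b ^ 2 + 2 * C₂ * b ^ (τ₁ + 1) + 2 * b ^ τ₂ ≤ qm c₃ (2 * n + 2) C₀ * κ := by
    rw [hκd, mul_div_cancel₀ _ hq0.ne']
  set C₄ := (2 * n + 2 : ℕ) * c₃ * exp ((2 * n + 2 : ℕ) * c₃) with hC₄e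
  set C₅ := exp (c₃ * (w0 c₁ + 1)) * exp ((w0 c₁ + 1) * exp (c₃ * (w0 c₁ + 1))) with hC₅e
  have hC₅ : 0 < C₅ := by positivity
  set t₁ := ((2 * n + 2 : ℕ) * c₃ + κ) / g0 c₁ with ht₁
  set t₂ := (C₄ * d₀ + 1) / ((1 - α) / 2 * g0 c₁) with ht₂
  set z₀ := max (max κ (w0 c₁ + 1)) (max t₁ t₂) with hz₀
  set η₀ := min 1 (g0 c₁ / 2 / ((2 * α / (1 - α)) ^ τ₂ + 1)) with hη₀
  have hM : 0 < (2 * α / (1 - α)) ^ τ₂ + 1 := by positivity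
  have hz₀1 : 1 ≤ z₀ := by
    have : w0 c₁ + 1 ≤ z₀ := (le_max_right _ _).trans (le_max_left _ _)
    linarith
  set B₀ := exp (z₀ * exp (c₃ * z₀)) with hB₀
  set B₁ := exp (w0 c₁ * exp (c₃ * w0 c₁)) with hB₁
  set Cf := B₀ * Cm + exp κ * (C₅ * (2 + d₀) * Cm) + B₁ * Cm with hCf
  have hB₀p : 0 < B₀ := exp_pos _
  have hB₁p : 0 < B₁ := exp_pos _
  refine ⟨η₀, Cf, by positivity, min_le_left _ _, by positivity, ?_⟩
  intro g ν δ δ₁ δ₂ d₁ h hν hδ hδη hδ₁ hδ₂ hδ₂η hae hI z hz h1 h2 h3 k hk0 hkm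
  have hδ1 : δ ≤ 1 := hδη.trans (min_le_left _ _)
  have hm := hmom g ν δ δ₁ δ₂ τ₁ τ₂ d₁ h hν hδ hδ1 hae hI
  have hgz := h.nonneg hz
  have hS : ∀ᵐ w ∂ν, w ∈ {w | δ * |g w| ≤ d₁} := hae
  have hgb : BddOn {w | δ * |g w| ≤ d₁} (fun w => |g w|) := BddOn.abs_g hδ
  have hpb : BddOn {w | δ * |g w| ≤ d₁} (fun w => (1 + |g w|) ^ (2 * n + 2)) := ((BddOn.const 1).add hgb).pow _
  have hgm := h.meas
  have hpm : Measurable (fun w => (1 + |g w|) ^ (2 * n + 2)) := by fun_prop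
  have ipm := hpb.integrable hpm hS
  have hX1 : ∀ w, 1 ≤ 1 + |g w| := fun w => by linarith [abs_nonneg (g w)]
  have hkpow : ∀ x : ℝ, 1 ≤ x → x ^ k ≤ x ^ (2 * n + 2) := by
    intro x hx
    rw [← rpow_natCast]
    exact rpow_le_rpow_of_exponent_le hx hkm
  have hY : 1 ≤ (1 + g z) ^ k := one_le_rpow (by linarith) hk0
  have hBpos : ∀ w, 0 < Bz g z w := fun w => exp_pos _
  have hXk : ∀ w, 0 < (1 + |g w|) ^ k := fun w => rpow_pos_of_pos (by linarith [hX1 w]) _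
  rcases lt_or_ge z z₀ with hzz | hzz
  · have hpt : ∀ w, (1 + |g w|) ^ k * Bz g z w ≤ B₀ * (1 + |g w|) ^ (2 * n + 2) := by
      intro w
      have e1 := h.Bz_le hz w
      have e2 : exp (Gfun g z) ≤ B₀ := exp_le_exp.2 (h.G_bound (by rw [abs_of_nonneg hz]; exact hzz.le))
      have e3 := hkpow _ (hX1 w)
      have e4 := e1.trans e2
      rw [mul_comm]
      have := hBpos w
      have := hXk w
      gcongr
    have e1 : ∫ w, (1 + |g w|) ^ k * Bz g z w ∂ν ≤ ∫ w, B₀ * (1 + |g w|) ^ (2 * n + 2) ∂ν := by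
      refine integral_mono_of_nonneg (Filter.Eventually.of_forall fun w => ?_) (ipm.const_mul _) (Filter.Eventually.of_forall hpt)
      exact (mul_pos (hXk w) (hBpos w)).le
    rw [integral_const_mul] at e1
    refine e1.trans ?_
    have hCf1 : B₀ * Cm ≤ Cf := by
      have : 0 ≤ exp κ * (C₅ * (2 + d₀) * Cm) + B₁ * Cm := by positivity
      linarith
    calc _ ≤ B₀ * Cm := by gcongr
      _ ≤ Cf := hCf1
      _ = Cf * 1 * 1 := by ring
      _ ≤ _ := by gcongr; linarith
  · have hzκ : κ ≤ z := ((le_max_left _ _).trans (le_max_left _ _)).trans hzz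
    have hzw : w0 c₁ + 1 ≤ z := ((le_max_right _ _).trans (le_max_left _ _)).trans hzz
    have hzt1 : t₁ ≤ z := ((le_max_left _ _).trans (le_max_right _ _)).trans hzz
    have hzt2 : t₂ ≤ z := ((le_max_right _ _).trans (le_max_right _ _)).trans hzz
    have hzp : 0 < z := by linarith
    have hz3 : (2 * n + 2 : ℕ) * c₃ + κ ≤ g0 c₁ * z := by
      rw [ht₁, div_le_iff₀ hg0] at hzt1
      linarith
    have hz4 : C₄ * d₀ + 1 ≤ (1 - α) / 2 * g0 c₁ * z := by
      rw [ht₂, div_le_iff₀ (by positivity)] at hzt2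
      linarith
    have hη : δ₂ * ((2 * α / (1 - α)) ^ τ₂ + 1) ≤ g0 c₁ / 2 := by
      have := hδ₂η.trans (min_le_right _ _)
      rwa [le_div_iff₀ hM] at this
    have core := tail_core h ν n hd₀ hα0 hα1 hτ₁ hτ₂ hδ hδ1 hδ₁ hδ₂ hae hI hη h1 h2 h3 hbe hC₀e hC₁e hC₂e hκ.le hκe
      hC₄e hC₅e hzκ hzw hz3 hz4
    set I : ℝ → ℝ := fun w => if w0 c₁ ≤ w then ut g κ z (2 * n + 2) w else 0 with hIdef
    have hIm : Measurable I :=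
      Measurable.ite measurableSet_Ici (h.ut_cont κ z _).measurable measurable_const
    have hIb : BddOn {w | δ * |g w| ≤ d₁} I := BddOn.ite (h.ut_bdd hz _ hδ) (BddOn.const 0)
    have iI := hIb.integrable hIm hS
    have hpt : ∀ w, (1 + |g w|) ^ k * Bz g z w ≤ (1 + g z) ^ k * (exp κ * I w + B₁ * (1 + |g w|) ^ (2 * n + 2)) := by
      intro w
      have hBw := hBpos w
      have hXkw := hXk w
      have hXw := hX1 w
      rcases lt_or_ge w (w0 c₁) with c | c
      · have hIw : I w = 0 := if_neg (by linarith)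
        have e1 : Bz g z w ≤ B₁ := by
          refine exp_le_exp.2 (h.G_bound ?_)
          rw [abs_of_nonneg (cl_nonneg _ _)]
          exact max_le (by linarith) ((min_le_left _ _).trans c.le)
        have e3 := hkpow _ hXw
        rw [hIw, mul_zero, zero_add]
        calc (1 + |g w|) ^ k * Bz g z w ≤ (1 + |g w|) ^ (2 * n + 2) * B₁ := by gcongr
          _ = 1 * (B₁ * (1 + |g w|) ^ (2 * n + 2)) := by ring
          _ ≤ _ := by gcongr
      · have hIw : I w = ut g κ z (2 * n + 2) w := if_pos c
        have hgw := h.nonneg (show 0 ≤ w by linarith)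
        have hρ := h.one_le_rho hz w
        have e1 : 1 + |g w| ≤ (1 + g z) * rho g z w := by
          rw [abs_of_nonneg hgw, rho, mul_div_cancel₀ _ (by linarith)]
          linarith [h.mono (le_max_left w z)]
        have e2 : (1 + |g w|) ^ k ≤ (1 + g z) ^ k * rho g z w ^ (2 * n + 2) := by
          calc (1 + |g w|) ^ k ≤ ((1 + g z) * rho g z w) ^ k := rpow_le_rpow (by linarith) e1 hk0
            _ = (1 + g z) ^ k * rho g z w ^ k := mul_rpow (by linarith) (by linarith)
            _ ≤ _ := by
              have := hkpow _ hρ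
              gcongr
        have e3 : rho g z w ^ (2 * n + 2) * Bz g z w ≤ exp κ * ut g κ z (2 * n + 2) w := by
          unfold ut Bz
          have : exp (Gfun g (cl z w)) ≤ exp κ * exp (Gfun g (cl z w) - κ * cl z w / z) := by
            rw [← exp_add]
            apply exp_le_exp.2
            have : κ * cl z w / z ≤ κ := by
              rw [div_le_iff₀ hzp]
              have := cl_le hz w
              gcongr
            linarith
          calc _ ≤ rho g z w ^ (2 * n + 2) * (exp κ * exp (Gfun g (cl z w) - κ * cl z w / z)) := by gcongr
            _ = _ := by ring
        rw [hIw]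
        calc (1 + |g w|) ^ k * Bz g z w ≤ (1 + g z) ^ k * rho g z w ^ (2 * n + 2) * Bz g z w := by gcongr
          _ = (1 + g z) ^ k * (rho g z w ^ (2 * n + 2) * Bz g z w) := by ring
          _ ≤ (1 + g z) ^ k * (exp κ * ut g κ z (2 * n + 2) w) := by gcongr
          _ ≤ _ := by
            gcongr
            have : 0 ≤ B₁ * (1 + |g w|) ^ (2 * n + 2) := by positivity
            linarith
    have iR : Integrable (fun w => exp κ * I w + B₁ * (1 + |g w|) ^ (2 * n + 2)) ν := (iI.const_mul _).add (ipm.const_mul _)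
    have e1 : ∫ w, (1 + |g w|) ^ k * Bz g z w ∂ν ≤
        ∫ w, (1 + g z) ^ k * (exp κ * I w + B₁ * (1 + |g w|) ^ (2 * n + 2)) ∂ν := by
      refine integral_mono_of_nonneg (Filter.Eventually.of_forall fun w => ?_) (iR.const_mul _) (Filter.Eventually.of_forall hpt)
      exact (mul_pos (hXk w) (hBpos w)).le
    rw [integral_const_mul, integral_add (iI.const_mul _) (ipm.const_mul _), integral_const_mul, integral_const_mul] at e1
    refine e1.trans ?_
    have f1 : ∫ w, I w ∂ν ≤ z * (C₅ * (2 + d₀)) * Cm := core.trans (by gcongr)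
    have f2 : exp κ * ∫ w, I w ∂ν + B₁ * ∫ w, (1 + |g w|) ^ (2 * n + 2) ∂ν ≤ Cf * (1 + z) := by
      calc _ ≤ exp κ * (z * (C₅ * (2 + d₀)) * Cm) + B₁ * Cm := by gcongr
        _ ≤ _ := by
          have p1 : 0 ≤ B₀ * Cm * (1 + z) := by positivity
          have p2 : 0 ≤ B₁ * Cm * z := by positivity
          have p3 : 0 ≤ exp κ * (C₅ * (2 + d₀) * Cm) := by positivity
          rw [hCf]
          linarith
    calc _ ≤ (1 + g z) ^ k * (Cf * (1 + z)) := by gcongr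
      _ = _ := by ring


/-- Solution of the Stein equation for the indicator of `(z', ∞)`. -/
noncomputable def fS (g : ℝ → ℝ) (c₁ z w : ℝ) : ℝ :=
  Qf g c₁ (max z w) * (1 - Qf g c₁ (min z w)) * (exp (Gfun g w) / c₁)

/-- Its right derivative. -/
noncomputable def fS' (g : ℝ → ℝ) (c₁ z w : ℝ) : ℝ :=
  g w * fS g c₁ z w + Qf g c₁ z - (if z ≤ w then 1 else 0)

noncomputable def Kd (c₁ c₃ C₀ : ℝ) : ℝ := exp c₃ * exp C₀ * (exp (exp c₃) / c₁)
noncomputable def KQ (c₃ C₀ : ℝ) : ℝ := exp C₀ * exp (exp c₃)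
noncomputable def Kb (c₃ C₀ : ℝ) : ℝ := 1 + KQ c₃ C₀ * (1 + C₀)
noncomputable def Kf (c₁ c₃ C₀ : ℝ) : ℝ :=
  Kb c₃ C₀ * (Cm c₁ c₃ / c₁) + Kb c₃ C₀ * exp (exp c₃ * (1 + C₀)) / c₁ + Cm c₁ c₃ / c₁ * Kd c₁ c₃ C₀
noncomputable def Kg (c₁ c₃ C₀ : ℝ) : ℝ := Kf c₁ c₃ C₀ + Kb c₃ C₀ + Kd c₁ c₃ C₀
noncomputable def KL (c₁ c₃ C₀ : ℝ) : ℝ :=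
  c₃ * exp c₃ * (Kf c₁ c₃ C₀ * exp C₀) + exp c₃ * exp C₀ * Kg c₁ c₃ C₀

namespace GG
variable {g : ℝ → ℝ} {c₁ c₃ : ℝ}

lemma Q_cont (h : GG g c₁ c₃) : Continuous (Qf g c₁) :=
  continuous_iff_continuousAt.2 fun w => (h.hasDerivAt_Q w).continuousAt

lemma fS_cont (h : GG g c₁ c₃) (z : ℝ) : Continuous (fS g c₁ z) := by
  have := h.Q_cont
  have := h.contG
  unfold fS; fun_prop

lemma fS_nonneg (h : GG g c₁ c₃) (z w : ℝ) : 0 ≤ fS g c₁ z w := by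
  have h1 := h.Q_pos (max z w)
  have h2 := h.Q_le_one (min z w)
  have h3 := h.c₁pos
  unfold fS
  have : 0 ≤ 1 - Qf g c₁ (min z w) := by linarith
  positivity

lemma fS_deriv (h : GG g c₁ c₃) (z w : ℝ) :
    HasDerivWithinAt (fS g c₁ z) (fS' g c₁ z w) (Set.Ici w) w := by
  have hc := h.c₁pos
  have hE : HasDerivAt (fun x => exp (Gfun g x) / c₁) (exp (Gfun g w) * g w / c₁) w :=
    ((h.hasDerivAt_G w).exp).div_const _
  have hQ := h.hasDerivAt_Q w
  have hp : pfun g c₁ w * (exp (Gfun g w) / c₁) = 1 := by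
    unfold pfun
    rw [exp_neg]
    have := exp_pos (Gfun g w)
    field_simp
  unfold fS'
  split_ifs with hzw
  · have e : ∀ x, z ≤ x → fS g c₁ z x = Qf g c₁ x * (1 - Qf g c₁ z) * (exp (Gfun g x) / c₁) := by
      intro x hx
      rw [fS, max_eq_right hx, min_eq_left hx]
    have hd := ((hQ.mul_const (1 - Qf g c₁ z)).mul hE).hasDerivWithinAt (s := Set.Ici w)
    refine (hd.congr_of_eventuallyEq ?_ (e w hzw)).congr_deriv ?_
    · filter_upwards [self_mem_nhdsWithin] with x hx
      exact e x (hzw.trans hx)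
    · rw [e w hzw]
      linear_combination (-(1 - Qf g c₁ z)) * hp
  · push Not at hzw
    have e : ∀ x, x < z → fS g c₁ z x = Qf g c₁ z * (1 - Qf g c₁ x) * (exp (Gfun g x) / c₁) := by
      intro x hx
      rw [fS, max_eq_left hx.le, min_eq_right hx.le]
    have hd := (((hQ.const_sub 1).const_mul (Qf g c₁ z)).mul hE).hasDerivWithinAt (s := Set.Ici w)
    refine (hd.congr_of_eventuallyEq ?_ (e w hzw)).congr_deriv ?_
    · filter_upwards [mem_nhdsWithin_of_mem_nhds (gt_mem_nhds hzw)] with x hx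
      exact e x hx
    · rw [e w hzw]
      linear_combination (Qf g c₁ z) * hp

lemma exp_le_Q (h : GG g c₁ c₃) {z : ℝ} (hz : 0 ≤ z) : c₁ * exp (-Gfun g z) ≤ exp (exp c₃) * ((1 + g z) * Qf g c₁ z) := by
  have := h.mills_lower z
  rw [abs_of_nonneg (h.nonneg hz)] at this
  have e : c₁ * exp (-Gfun g z) = exp (exp c₃) * (c₁ * exp (-exp c₃) * exp (-Gfun g z)) := by
    have : exp (exp c₃) * exp (-exp c₃) = 1 := by rw [← exp_add]; simp
    linear_combination (-(c₁ * exp (-Gfun g z))) * this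
  rw [e]
  gcongr

lemma Bz_low (h : GG g c₁ c₃) {z δ C₀ w : ℝ} (hz : 0 ≤ z) (hδ : 0 ≤ δ) (hC : δ * g z ≤ C₀) (hw : z - δ ≤ w) :
    exp (Gfun g z) ≤ exp C₀ * Bz g z w := by
  unfold Bz
  rw [← exp_add]
  apply exp_le_exp.2
  have h1 := h.G_le z (cl z w)
  have hgz := h.nonneg hz
  have h2 : z - δ ≤ cl z w := le_max_of_le_right (le_min hw (by linarith))
  nlinarith

/-- Lower bound for the envelope near and beyond `z`. -/
lemma env_one (h : GG g c₁ c₃) {z δ C₀ w : ℝ} (hz : 0 ≤ z) (hδ : 0 ≤ δ) (hδ1 : δ ≤ 1) (hC : δ * g z ≤ C₀) (hw : z - δ ≤ w) :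
    1 ≤ Kd c₁ c₃ C₀ * ((1 + |g w|) * (Qf g c₁ z * Bz g z w)) := by
  have hc := h.c₁pos
  have hc3 := h.c₃pos
  have hgz := h.nonneg hz
  have hQ := h.Q_pos z
  have h1 := h.exp_le_Q hz
  have h2 := h.Bz_low hz hδ hC hw
  have hX : 0 < 1 + |g w| := by positivity
  have h3 : 1 + g z ≤ exp c₃ * (1 + |g w|) := by
    rcases le_total z w with hzw | hzw
    · have a := h.mono hzw
      have b := one_le_exp hc3.le
      have d := le_abs_self (g w)
      calc 1 + g z ≤ 1 * (1 + |g w|) := by linarith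
        _ ≤ _ := by gcongr
    · have := h.growth1 (x := z) (y := w) (by rw [abs_of_nonneg (by linarith)]; linarith)
      rwa [abs_of_nonneg hgz] at this
  have h4 : exp (-Gfun g z) * exp (Gfun g z) = 1 := by rw [← exp_add]; simp
  have h5 : c₁ ≤ exp (exp c₃) * ((exp c₃ * (1 + |g w|)) * Qf g c₁ z) * (exp C₀ * Bz g z w) := by
    calc c₁ = c₁ * exp (-Gfun g z) * exp (Gfun g z) := by rw [mul_assoc, h4, mul_one]
      _ ≤ exp (exp c₃) * ((1 + g z) * Qf g c₁ z) * (exp C₀ * Bz g z w) := by gcongr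
      _ ≤ _ := by
        have : 0 < Bz g z w := exp_pos _
        gcongr
  unfold Kd
  have e : exp c₃ * exp C₀ * (exp (exp c₃) / c₁) * ((1 + |g w|) * (Qf g c₁ z * Bz g z w)) =
     (exp (exp c₃) * ((exp c₃ * (1 + |g w|)) * Qf g c₁ z) * (exp C₀ * Bz g z w)) / c₁ := by ring
  rw [e, one_le_div hc]
  exact h5

lemma Q_diff' (h : GG g c₁ c₃) {z z' δ C₀ : ℝ} (hz : 0 ≤ z) (hzz : |z' - z| ≤ δ) (hC : δ * g z ≤ C₀) :
    |Qf g c₁ z' - Qf g c₁ z| ≤ KQ c₃ C₀ * (δ * (1 + g z)) * Qf g c₁ z := by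
  refine (h.Q_diff hz hzz hC).trans ?_
  have hδ : 0 ≤ δ := (abs_nonneg _).trans hzz
  have h1 := h.exp_le_Q hz
  calc δ * (c₁ * exp C₀ * exp (-Gfun g z)) = δ * exp C₀ * (c₁ * exp (-Gfun g z)) := by ring
    _ ≤ δ * exp C₀ * (exp (exp c₃) * ((1 + g z) * Qf g c₁ z)) := by gcongr
    _ = _ := by unfold KQ; ring

lemma Q_le' (h : GG g c₁ c₃) {z z' δ C₀ : ℝ} (hz : 0 ≤ z) (hzz : |z' - z| ≤ δ) (hδ1 : δ ≤ 1) (hC : δ * g z ≤ C₀) :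
    Qf g c₁ z' ≤ Kb c₃ C₀ * Qf g c₁ z := by
  have h1 := (le_abs_self _).trans (h.Q_diff' hz hzz hC)
  have hQ := h.Q_pos z
  have h2 : KQ c₃ C₀ * (δ * (1 + g z)) * Qf g c₁ z ≤ KQ c₃ C₀ * (1 + C₀) * Qf g c₁ z := by
    have : 0 < KQ c₃ C₀ := by unfold KQ; positivity
    gcongr
    linarith
  unfold Kb
  linarith

lemma Bz_ratio (h : GG g c₁ c₃) {z δ C₀ x ξ : ℝ} (hz : 0 ≤ z) (hC : δ * g z ≤ C₀) (hd : |ξ - x| ≤ δ) :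
    Bz g z ξ ≤ exp C₀ * Bz g z x := by
  unfold Bz
  rw [← exp_add]
  apply exp_le_exp.2
  have h1 := h.G_le (cl z ξ) (cl z x)
  have h2 := (le_abs_self _).trans ((cl_lip z ξ x).trans hd)
  have hδ : 0 ≤ δ := (abs_nonneg _).trans hd
  have h3 := h.mono (cl_le hz ξ)
  have h4 := h.nonneg (cl_nonneg z ξ)
  have : g (cl z ξ) * (cl z ξ - cl z x) ≤ g z * δ := by
    calc _ ≤ g (cl z ξ) * δ := by gcongr
      _ ≤ _ := by gcongr
  linarith

lemma fS_le (h : GG g c₁ c₃) {z z' δ C₀ : ℝ} (hz : 0 ≤ z) (hzz : |z' - z| ≤ δ) (hδ1 : δ ≤ 1) (hC : δ * g z ≤ C₀) (w : ℝ) :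
    fS g c₁ z' w ≤ Kf c₁ c₃ C₀ * (Qf g c₁ z * Bz g z w) := by
  have hδ : 0 ≤ δ := (abs_nonneg _).trans hzz
  have hzz' := abs_le.1 hzz
  have hc := h.c₁pos
  have hgz := h.nonneg hz
  have hC0 : 0 ≤ C₀ := le_trans (by positivity) hC
  have hQ := h.Q_pos z
  have hB := h.one_le_Bz z w
  have hCm := Cm_pos (c₃ := c₃) hc
  have hKQ : 0 < KQ c₃ C₀ := by unfold KQ; positivity
  have hKb : 0 < Kb c₃ C₀ := by unfold Kb; positivity
  have hKd : 0 < Kd c₁ c₃ C₀ := by unfold Kd; positivity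
  have hX : 1 ≤ 1 + |g w| := by linarith [abs_nonneg (g w)]
  have hQ' := h.Q_le' hz hzz hδ1 hC
  have hQ'0 := h.Q_pos z'
  have hQw := h.Q_pos w
  have hQw1 := h.Q_le_one w
  have t1 : 0 ≤ Kb c₃ C₀ * (Cm c₁ c₃ / c₁) * (Qf g c₁ z * Bz g z w) := by positivity
  have t2 : 0 ≤ Kb c₃ C₀ * exp (exp c₃ * (1 + C₀)) / c₁ * (Qf g c₁ z * Bz g z w) := by positivity
  have t3 : 0 ≤ Cm c₁ c₃ / c₁ * Kd c₁ c₃ C₀ * (Qf g c₁ z * Bz g z w) := by positivity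
  have hG : exp (-Gfun g w) * exp (Gfun g w) = 1 := by rw [← exp_add]; simp
  have hGp := exp_pos (Gfun g w)
  rw [Kf, add_mul, add_mul]
  rcases le_total w z' with hwz | hwz
  · rw [fS, max_eq_left hwz, min_eq_right hwz]
    rcases le_total w 0 with hw0 | hw0
    · have m := h.mills' (w := w) (by linarith)
      have m1 : (1 - Qf g c₁ w) * exp (Gfun g w) ≤ Cm c₁ c₃ := by
        calc (1 - Qf g c₁ w) * exp (Gfun g w) ≤ ((1 + |g w|) * (1 - Qf g c₁ w)) * exp (Gfun g w) := by
              gcongr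
              exact le_mul_of_one_le_left (by linarith) hX
          _ ≤ Cm c₁ c₃ * exp (-Gfun g w) * exp (Gfun g w) := by gcongr
          _ = _ := by rw [mul_assoc, hG, mul_one]
      have : Qf g c₁ z' * (1 - Qf g c₁ w) * (exp (Gfun g w) / c₁) ≤ Kb c₃ C₀ * (Cm c₁ c₃ / c₁) * (Qf g c₁ z * Bz g z w) := by
        calc _ = Qf g c₁ z' * (((1 - Qf g c₁ w) * exp (Gfun g w)) / c₁) := by ring
          _ ≤ (Kb c₃ C₀ * Qf g c₁ z) * (Cm c₁ c₃ / c₁) := by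
            gcongr
          _ = Kb c₃ C₀ * (Cm c₁ c₃ / c₁) * (Qf g c₁ z * 1) := by ring
          _ ≤ _ := by gcongr
      linarith
    · have b1 : exp (Gfun g w) ≤ exp (exp c₃ * (1 + C₀)) * Bz g z w := by
        unfold Bz
        rw [← exp_add]
        apply exp_le_exp.2
        have p : 0 < exp c₃ * (1 + C₀) := by positivity
        rcases le_total w z with hz2 | hz2
        · rw [cl_of_mem hw0 hz2]; linarith
        · rw [cl_of_ge hz hz2]
          have a := h.G_le w z
          have hd : |w - z| ≤ 1 := by rw [abs_of_nonneg (by linarith)]; linarith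
          have b := h.growth1 hd
          rw [abs_of_nonneg hgz] at b
          have b' := le_abs_self (g w)
          have gw := h.nonneg hw0
          have : g w * (w - z) ≤ exp c₃ * (1 + C₀) := by
            calc g w * (w - z) ≤ (exp c₃ * (1 + g z)) * δ := by
                  apply mul_le_mul _ (by linarith) (by linarith) (by positivity)
                  linarith
              _ = exp c₃ * (δ + δ * g z) := by ring
              _ ≤ _ := by gcongr
          linarith
      have : Qf g c₁ z' * (1 - Qf g c₁ w) * (exp (Gfun g w) / c₁) ≤
          Kb c₃ C₀ * exp (exp c₃ * (1 + C₀)) / c₁ * (Qf g c₁ z * Bz g z w) := by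
        calc _ ≤ (Kb c₃ C₀ * Qf g c₁ z) * 1 * ((exp (exp c₃ * (1 + C₀)) * Bz g z w) / c₁) := by
              gcongr
              linarith
          _ = _ := by ring
      linarith
  · rw [fS, max_eq_right hwz, min_eq_left hwz]
    have m := h.mills (w := w) (by linarith)
    have hQz1 := h.Q_le_one z'
    have m1 : (1 + |g w|) * (Qf g c₁ w * exp (Gfun g w)) ≤ Cm c₁ c₃ := by
      calc _ = ((1 + |g w|) * Qf g c₁ w) * exp (Gfun g w) := by ring
        _ ≤ Cm c₁ c₃ * exp (-Gfun g w) * exp (Gfun g w) := by gcongr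
        _ = _ := by rw [mul_assoc, hG, mul_one]
    have o := h.env_one (w := w) hz hδ hδ1 hC (by linarith)
    have m2 : Qf g c₁ w * exp (Gfun g w) ≤ Cm c₁ c₃ * (Kd c₁ c₃ C₀ * (Qf g c₁ z * Bz g z w)) := by
      calc _ = Qf g c₁ w * exp (Gfun g w) * 1 := by ring
        _ ≤ Qf g c₁ w * exp (Gfun g w) * (Kd c₁ c₃ C₀ * ((1 + |g w|) * (Qf g c₁ z * Bz g z w))) := by gcongr
        _ = (1 + |g w|) * (Qf g c₁ w * exp (Gfun g w)) * (Kd c₁ c₃ C₀ * (Qf g c₁ z * Bz g z w)) := by ring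
        _ ≤ _ := by gcongr
    have : Qf g c₁ w * (1 - Qf g c₁ z') * (exp (Gfun g w) / c₁) ≤ Cm c₁ c₃ / c₁ * Kd c₁ c₃ C₀ * (Qf g c₁ z * Bz g z w) := by
      calc _ ≤ Qf g c₁ w * 1 * (exp (Gfun g w) / c₁) := by gcongr; linarith
        _ = (Qf g c₁ w * exp (Gfun g w)) / c₁ := by ring
        _ ≤ (Cm c₁ c₃ * (Kd c₁ c₃ C₀ * (Qf g c₁ z * Bz g z w))) / c₁ := by gcongr
        _ = _ := by ring
    linarith

lemma K_pos (hc : 0 < c₁) {C₀ : ℝ} (hC0 : 0 ≤ C₀) : 0 < Kd c₁ c₃ C₀ ∧ 0 < KQ c₃ C₀ ∧ 0 < Kb c₃ C₀ ∧ 0 < Kf c₁ c₃ C₀ ∧ 0 < Kg c₁ c₃ C₀ := by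
  have hCm := Cm_pos (c₃ := c₃) hc
  have hKQ : 0 < KQ c₃ C₀ := by unfold KQ; positivity
  have hKb : 0 < Kb c₃ C₀ := by unfold Kb; positivity
  have hKd : 0 < Kd c₁ c₃ C₀ := by unfold Kd; positivity
  have hKf : 0 < Kf c₁ c₃ C₀ := by unfold Kf; positivity
  have hKg : 0 < Kg c₁ c₃ C₀ := by unfold Kg; positivity
  exact ⟨hKd, hKQ, hKb, hKf, hKg⟩

/-- Bound on `|g f + Q(z') - 1{..}|` for any indicator supported on `[z - δ, ∞)`. -/
lemma D_le (h : GG g c₁ c₃) {z z' δ C₀ : ℝ} (hz : 0 ≤ z) (hzz : |z' - z| ≤ δ) (hδ1 : δ ≤ 1) (hC : δ * g z ≤ C₀) (w : ℝ)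
    {i : ℝ} (hi : i = 0 ∨ (i = 1 ∧ z - δ ≤ w)) :
    |g w * fS g c₁ z' w + Qf g c₁ z' - i| ≤ Kg c₁ c₃ C₀ * ((1 + |g w|) * (Qf g c₁ z * Bz g z w)) := by
  have hδ : 0 ≤ δ := (abs_nonneg _).trans hzz
  have hC0 : 0 ≤ C₀ := le_trans (mul_nonneg hδ (h.nonneg hz)) hC
  obtain ⟨hKd, hKQ, hKb, hKf, hKg⟩ := K_pos (c₃ := c₃) h.c₁pos hC0
  have hQ := h.Q_pos z
  have hB := h.one_le_Bz z w
  have hf := h.fS_le hz hzz hδ1 hC w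
  have hf0 := h.fS_nonneg z' w
  have hQ' := h.Q_le' hz hzz hδ1 hC
  have hQ'0 := h.Q_pos z'
  have hX : 1 ≤ 1 + |g w| := by linarith [abs_nonneg (g w)]
  have hi' : |i| ≤ Kd c₁ c₃ C₀ * ((1 + |g w|) * (Qf g c₁ z * Bz g z w)) := by
    rcases hi with rfl | ⟨rfl, hw⟩
    · simp only [abs_zero]; positivity
    · rw [abs_one]; exact h.env_one hz hδ hδ1 hC hw
  have a1 : |g w * fS g c₁ z' w| ≤ Kf c₁ c₃ C₀ * ((1 + |g w|) * (Qf g c₁ z * Bz g z w)) := by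
    rw [abs_mul, abs_of_nonneg hf0]
    calc |g w| * fS g c₁ z' w ≤ (1 + |g w|) * (Kf c₁ c₃ C₀ * (Qf g c₁ z * Bz g z w)) := by
          gcongr
          linarith
      _ = _ := by ring
  have a2 : Qf g c₁ z' ≤ Kb c₃ C₀ * ((1 + |g w|) * (Qf g c₁ z * Bz g z w)) := by
    calc _ ≤ Kb c₃ C₀ * (1 * (Qf g c₁ z * 1)) := by linarith
      _ ≤ _ := by gcongr
  have a3 := abs_sub (g w * fS g c₁ z' w + Qf g c₁ z') i
  have a4 := abs_add_le (g w * fS g c₁ z' w) (Qf g c₁ z')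
  rw [abs_of_pos hQ'0] at a4
  unfold Kg
  linarith

lemma gf_lip (h : GG g c₁ c₃) {z z' δ C₀ : ℝ} (hz : 0 ≤ z) (hzz : |z' - z| ≤ δ) (hδ1 : δ ≤ 1) (hC : δ * g z ≤ C₀) {x ξ : ℝ}
    (hd : |ξ - x| ≤ δ) :
    |g ξ * fS g c₁ z' ξ - g x * fS g c₁ z' x| ≤ KL c₁ c₃ C₀ * (δ * (1 + |g x|) ^ 2 * (Qf g c₁ z * Bz g z x)) := by
  have hδ : 0 ≤ δ := (abs_nonneg _).trans hzz
  have hC0 : 0 ≤ C₀ := le_trans (mul_nonneg hδ (h.nonneg hz)) hC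
  obtain ⟨hKd, hKQ, hKb, hKf, hKg⟩ := K_pos (c₃ := c₃) h.c₁pos hC0
  have hc3 := h.c₃pos
  have hQ := h.Q_pos z
  have hB := h.one_le_Bz z x
  have hX : 1 ≤ 1 + |g x| := by linarith [abs_nonneg (g x)]
  have hfξ := h.fS_le hz hzz hδ1 hC ξ
  have hf0 := h.fS_nonneg z' ξ
  have hBξ := h.Bz_ratio hz hC hd
  have a1 : |g ξ - g x| ≤ c₃ * exp c₃ * (1 + |g x|) * δ :=
    (h.lip (hd.trans hδ1)).trans (by gcongr)
  have a2 : fS g c₁ z' ξ ≤ Kf c₁ c₃ C₀ * (Qf g c₁ z * (exp C₀ * Bz g z x)) := hfξ.trans (by gcongr)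
  have a3 : |fS g c₁ z' ξ - fS g c₁ z' x| ≤
      Kg c₁ c₃ C₀ * ((exp c₃ * (1 + |g x|)) * (Qf g c₁ z * (exp C₀ * Bz g z x))) * δ := by
    refine (abs_slope_le (h.fS_cont z') (fun t => h.fS_deriv z' t) (x := ξ) (y := x) (fun t ht => ?_)).trans
      (mul_le_mul_of_nonneg_left hd (by positivity))
    have ht' : |t - x| ≤ δ := by
      have := Set.abs_sub_right_of_mem_uIcc ht
      rw [abs_sub_comm t x]
      exact (this.trans_eq (abs_sub_comm x ξ)).trans hd
    have d := h.D_le hz hzz hδ1 hC t (i := if z' ≤ t then 1 else 0) (by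
      by_cases c : z' ≤ t
      · right; simp only [c, if_true, true_and]; linarith [(abs_le.1 hzz).1]
      · left; simp [c])
    refine d.trans ?_
    have b1 := h.growth1 (ht'.trans hδ1)
    have b2 := h.Bz_ratio hz hC ht'
    have : 0 < Bz g z t := exp_pos _
    gcongr
  have e : g ξ * fS g c₁ z' ξ - g x * fS g c₁ z' x = (g ξ - g x) * fS g c₁ z' ξ + g x * (fS g c₁ z' ξ - fS g c₁ z' x) := by ring
  rw [e]
  refine (abs_add_le _ _).trans ?_
  rw [abs_mul, abs_mul, abs_of_nonneg hf0]
  calc _ ≤ c₃ * exp c₃ * (1 + |g x|) * δ * (Kf c₁ c₃ C₀ * (Qf g c₁ z * (exp C₀ * Bz g z x))) +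
        |g x| * (Kg c₁ c₃ C₀ * ((exp c₃ * (1 + |g x|)) * (Qf g c₁ z * (exp C₀ * Bz g z x))) * δ) := by gcongr
    _ ≤ (c₃ * exp c₃ * (1 + |g x|) * δ * (Kf c₁ c₃ C₀ * (Qf g c₁ z * (exp C₀ * Bz g z x)))) * (1 + |g x|) +
        (1 + |g x|) * (Kg c₁ c₃ C₀ * ((exp c₃ * (1 + |g x|)) * (Qf g c₁ z * (exp C₀ * Bz g z x))) * δ) := by
        refine add_le_add (le_mul_of_one_le_right (by positivity) hX) (mul_le_mul_of_nonneg_right ?_ (by positivity))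
        linarith
    _ = _ := by unfold KL; ring

end GG


lemma BddOn.rpow_g {g : ℝ → ℝ} {δ d₁ : ℝ} (hδ : 0 < δ) {k : ℝ} (hk : 0 ≤ k) :
    BddOn {w | δ * |g w| ≤ d₁} (fun w => (1 + |g w|) ^ k) := by
  obtain ⟨M, hM⟩ := BddOn.abs_g (g := g) (d₁ := d₁) hδ
  refine ⟨(1 + M) ^ k, fun w hw => ?_⟩
  have h1 := hM w hw
  rw [abs_abs] at h1
  rw [abs_of_nonneg (rpow_nonneg (by positivity) _)]
  exact rpow_le_rpow (by positivity) (by linarith) hk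

set_option maxHeartbeats 1600000 in
lemma stein_bound {g : ℝ → ℝ} {c₁ c₃ : ℝ} (h : GG g c₁ c₃) (ν : Measure ℝ) [IsProbabilityMeasure ν]
    {δ δ₁ δ₂ τ₁ τ₂ d₀ d₁ α z z' ε C₀ s : ℝ} (hd₀ : 1 ≤ d₀) (hτ₁ : 0 < τ₁) (hτ₂ : 0 < τ₂)
    (hδ : 0 < δ) (hδε : δ ≤ ε) (hε1 : ε ≤ 1) (hδ₁ : 0 ≤ δ₁) (hδ₂ : 0 ≤ δ₂)
    (hae : ∀ᵐ w ∂ν, δ * |g w| ≤ d₁) (hI : IneqProp ν g δ δ₁ δ₂ τ₁ τ₂ d₀ d₁ α)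
    (hz : 0 ≤ z) (hzz : |z' - z| ≤ ε) (hC : ε * g z ≤ C₀) (hs : |s| = 1)
    (hind : ∀ x ξ, |ξ - x| ≤ δ → s * ((if z < x then 1 else 0) - (if z' ≤ ξ then 1 else 0)) ≤ (0:ℝ)) :
    s * ((ν (Set.Ioi z)).toReal - Qf g c₁ z') ≤ Qf g c₁ z *
      (d₀ * KL c₁ c₃ C₀ * ε * (∫ w, (1 + |g w|) ^ (2:ℝ) * Bz g z w ∂ν)
        + 2 * Kg c₁ c₃ C₀ * δ₁ * (∫ w, (1 + |g w|) ^ (τ₁ + 1) * Bz g z w ∂ν)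
        + 2 * Kf c₁ c₃ C₀ * δ₂ * (∫ w, (1 + |g w|) ^ τ₂ * Bz g z w ∂ν)) := by
  have hε : 0 < ε := by linarith
  have hC0 : 0 ≤ C₀ := le_trans (mul_nonneg hε.le (h.nonneg hz)) hC
  obtain ⟨hKd, hKQ, hKb, hKf, hKg⟩ := GG.K_pos (c₃ := c₃) h.c₁pos hC0
  have hc3 := h.c₃pos
  have hKL : 0 < KL c₁ c₃ C₀ := by unfold KL; positivity
  have hQ := h.Q_pos z
  set S := {w | δ * |g w| ≤ d₁} with hSdef
  have hS : ∀ᵐ w ∂ν, w ∈ S := hae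
  have hgm := h.meas
  have hBm := (h.Bz_cont z).measurable
  have hfm := (h.fS_cont z').measurable
  have hgb : BddOn S (fun w => |g w|) := BddOn.abs_g hδ
  have hgb' : BddOn S g := hgb.mono fun w _ => le_rfl
  have hBb : BddOn S (Bz g z) := ⟨exp (Gfun g z), fun w _ => by
    rw [abs_of_pos (show 0 < Bz g z w from exp_pos _)]; exact h.Bz_le hz w⟩
  have hfb : BddOn S (fS g c₁ z') :=
    ((BddOn.const (Kf c₁ c₃ C₀)).mul ((BddOn.const (Qf g c₁ z)).mul hBb)).mono fun w _ => by
      rw [abs_of_nonneg (h.fS_nonneg _ _)]; exact h.fS_le hz hzz hε1 hC w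
  set ind : ℝ → ℝ := fun x => if z < x then 1 else 0 with hinddef
  have hindm : Measurable ind := Measurable.ite measurableSet_Ioi measurable_const measurable_const
  have hindb : BddOn S ind := BddOn.ite (BddOn.const 1) (BddOn.const 0)
  set Lp : ℝ → ℝ := fun x => KL c₁ c₃ C₀ * (ε * (1 + |g x|) ^ 2 * (Qf g c₁ z * Bz g z x)) with hLp
  have hLpm : Measurable Lp := by fun_prop
  have hLpb : BddOn S Lp := (BddOn.const _).mul
    (((BddOn.const _).mul (((BddOn.const 1).add hgb).pow 2)).mul ((BddOn.const _).mul hBb))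
  set J : ℝ → ℝ → ℝ := fun k w => (1 + |g w|) ^ k * Bz g z w with hJ
  have hJm : ∀ k, Measurable (J k) := fun k => by fun_prop
  have hJb : ∀ k, 0 ≤ k → BddOn S (J k) := fun k hk => (BddOn.rpow_g hδ hk).mul hBb
  set a₁ := Qf g c₁ z * (d₀ * KL c₁ c₃ C₀ * ε) with ha₁
  set a₂ := Qf g c₁ z * (2 * Kg c₁ c₃ C₀ * δ₁) with ha₂
  set a₃ := Qf g c₁ z * (2 * Kf c₁ c₃ C₀ * δ₂) with ha₃
  set Er : ℝ → ℝ := fun w => a₁ * J 2 w + a₂ * J (τ₁ + 1) w + a₃ * J τ₂ w with hEr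
  have hErm : Measurable Er := (((hJm _).const_mul _).add ((hJm _).const_mul _)).add ((hJm _).const_mul _)
  have hErb : BddOn S Er := ((((BddOn.const _).mul (hJb 2 (by norm_num))).add
    ((BddOn.const _).mul (hJb (τ₁ + 1) (by linarith)))).add ((BddOn.const _).mul (hJb τ₂ hτ₂.le)))
  set f : ℝ → ℝ := fun w => s * fS g c₁ z' w with hf
  set D : ℝ → ℝ := fun x => s * (g x * fS g c₁ z' x + Qf g c₁ z' - ind x) + Lp x with hD
  set Φ : ℝ → ℝ := fun w => s * (ind w - Qf g c₁ z') - Er w with hΦ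
  have hPhib : BddOn S (fun w => s * (ind w - Qf g c₁ z')) := (BddOn.const s).mul (hindb.sub (BddOn.const _))
  have hPhim : Measurable (fun w => s * (ind w - Qf g c₁ z')) := by fun_prop
  have key : ∫ w, Φ w ∂ν ≤ 0 := by
    refine hI f D Φ (by fun_prop) (by fun_prop) (by fun_prop) (BddOn.three ((BddOn.const s).mul hfb)
      (((BddOn.const s).mul (((hgb'.mul hfb).add (BddOn.const _)).sub hindb)).add hLpb) (hPhib.sub hErb)) ?_ ?_
    · intro x y hxy
      refine slope_le (u' := fun t => s * fS' g c₁ z' t) ((h.fS_cont z').const_mul s)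
        (fun t => (h.fS_deriv z' t).const_mul s) fun ξ hξ => ?_
      have hd : |ξ - x| ≤ δ := by
        have := Set.abs_sub_left_of_mem_uIcc hξ
        rw [abs_sub_comm y x] at this
        exact this.trans hxy
      have l := h.gf_lip hz hzz hε1 hC (x := x) (ξ := ξ) (hd.trans hδε)
      have l2 : s * (g ξ * fS g c₁ z' ξ - g x * fS g c₁ z' x) ≤ Lp x := by
        refine (le_abs_self _).trans ?_
        rw [abs_mul, hs, one_mul]
        exact l
      have l3 := hind x ξ hd
      simp only [fS', hD, hinddef]
      linarith
    · intro w r k hA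
      have hX0 := abs_nonneg (g w)
      set X := 1 + |g w| with hX
      have hX1 : 1 ≤ X := by linarith
      have hB0 : 0 < Bz g z w := exp_pos _
      have f0 := h.fS_nonneg z' w
      have f1 := h.fS_le hz hzz hε1 hC w
      have d1 := h.D_le hz hzz hε1 hC w (i := ind w) (by
        by_cases c : z < w
        · right; exact ⟨if_pos c, by linarith⟩
        · left; exact if_neg c)
      have e1 : |s * (r * fS g c₁ z' w)| ≤ a₃ * J τ₂ w := by
        rw [abs_mul, hs, one_mul, abs_mul, abs_of_nonneg f0]
        calc _ ≤ (δ₂ * (2 * X ^ τ₂)) * (Kf c₁ c₃ C₀ * (Qf g c₁ z * Bz g z w)) := by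
              refine mul_le_mul (hA.hr2.trans ?_) f1 f0 (by positivity)
              exact mul_le_mul_of_nonneg_left (rpow_add_one_le hX0 hτ₂) hδ₂
          _ = _ := by simp only [hJ, ha₃]; ring
      have e2 : |s * ((g w * fS g c₁ z' w + Qf g c₁ z' - ind w) * (k - 1))| ≤ a₂ * J (τ₁ + 1) w := by
        rw [abs_mul, hs, one_mul, abs_mul]
        calc _ ≤ (Kg c₁ c₃ C₀ * (X * (Qf g c₁ z * Bz g z w))) * (δ₁ * (2 * X ^ τ₁)) := by
              refine mul_le_mul d1 (hA.hk1.trans ?_) (abs_nonneg _) (by positivity)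
              exact mul_le_mul_of_nonneg_left (rpow_add_one_le hX0 hτ₁) hδ₁
          _ = _ := by
              simp only [hJ, ha₂]
              rw [← hX, rpow_add (by linarith), rpow_one]; ring
      have e3 : Lp w * k ≤ a₁ * J 2 w := by
        have hL0 : 0 ≤ Lp w := by positivity
        calc Lp w * k ≤ Lp w * d₀ := mul_le_mul_of_nonneg_left hA.hkd hL0
          _ = _ := by
            simp only [hJ, ha₁, hLp]
            rw [← hX, show (2:ℝ) = ((2:ℕ):ℝ) by norm_num, rpow_natCast]; ring
      have e1' := (abs_le.1 e1).2
      have e2' := (abs_le.1 e2).2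
      have e4 : (g w - r) * f w - D w * k = s * (ind w - Qf g c₁ z') - s * (r * fS g c₁ z' w) -
        s * ((g w * fS g c₁ z' w + Qf g c₁ z' - ind w) * (k - 1)) - Lp w * k := by
        simp only [hf, hD]; ring
      rw [e4]
      simp only [hΦ, hEr]
      linarith
  have i1 := (hJb 2 (by norm_num)).integrable (hJm 2) hS
  have i2 := (hJb (τ₁ + 1) (by linarith)).integrable (hJm _) hS
  have i3 := (hJb τ₂ hτ₂.le).integrable (hJm _) hS
  have iE := hErb.integrable hErm hS
  have iΦ := hPhib.integrable hPhim hS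
  have iind := hindb.integrable hindm hS
  have E1 : ∫ w, Er w ∂ν = a₁ * ∫ w, J 2 w ∂ν + a₂ * ∫ w, J (τ₁ + 1) w ∂ν + a₃ * ∫ w, J τ₂ w ∂ν := by
    simp only [hEr]
    rw [integral_add (f := fun w => _ * _ + _ * _) ((i1.const_mul _).add (i2.const_mul _)) (i3.const_mul _),
      integral_add (i1.const_mul _) (i2.const_mul _), integral_const_mul, integral_const_mul, integral_const_mul]
  have E2 : ∫ w, s * (ind w - Qf g c₁ z') ∂ν = s * ((ν (Set.Ioi z)).toReal - Qf g c₁ z') := by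
    rw [integral_const_mul, integral_sub iind (integrable_const _), integral_const]
    have : ind = (Set.Ioi z).indicator (fun _ => (1:ℝ)) := by
      ext x; simp [hinddef, Set.indicator_apply]
    rw [this, integral_indicator measurableSet_Ioi]
    simp [Measure.real]
  have E3 : ∫ w, Φ w ∂ν = s * ((ν (Set.Ioi z)).toReal - Qf g c₁ z') - ∫ w, Er w ∂ν := by
    rw [← E2]; exact integral_sub iΦ iE
  rw [E3, E1] at key
  refine (sub_nonpos.1 key).trans (le_of_eq ?_)
  rw [ha₁, ha₂, ha₃]; ring


noncomputable def CE (c₁ c₃ k : ℝ) : ℝ := (1 + w0 c₁) * exp (c₃ * w0 c₁) ^ k + 2 * (1 + 1 / g0 c₁) ^ k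

lemma CE_pos {c₁ c₃ k : ℝ} (hc : 0 < c₁) : 0 < CE c₁ c₃ k := by
  have := g0_pos hc
  have := one_le_w0 c₁
  have h1 : 0 < 1 + w0 c₁ := by linarith
  unfold CE; positivity

lemma GG.elem_bound {g : ℝ → ℝ} {c₁ c₃ : ℝ} (h : GG g c₁ c₃) {z k : ℝ} (hz : 0 ≤ z) (hk : 0 < k) :
    (1 + z) * (1 + g z) ^ k ≤ CE c₁ c₃ k * (1 + z * g z ^ k) := by
  have hg0 := g0_pos h.c₁pos
  have hw0 := one_le_w0 c₁
  have hgz := h.nonneg hz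
  have hA : 0 ≤ (1 + w0 c₁) * exp (c₃ * w0 c₁) ^ k := by positivity
  have hB : 0 ≤ 2 * (1 + 1 / g0 c₁) ^ k := by positivity
  have hP : 0 ≤ z * g z ^ k := by positivity
  unfold CE
  rcases le_total z (w0 c₁) with hzw | hzw
  · have h1 := h.growth0 (x := z) (a := w0 c₁) (by rwa [abs_of_nonneg hz])
    rw [abs_of_nonneg hgz] at h1
    have : (1 + z) * (1 + g z) ^ k ≤ (1 + w0 c₁) * exp (c₃ * w0 c₁) ^ k := by gcongr
    nlinarith
  · have h1 := h.lower hzw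
    have h2 : 1 + g z ≤ (1 + 1 / g0 c₁) * g z := by
      have : 1 ≤ 1 / g0 c₁ * g z := by rw [one_div, ← div_eq_inv_mul, one_le_div hg0]; exact h1
      linarith
    have h3 : (1 + g z) ^ k ≤ (1 + 1 / g0 c₁) ^ k * g z ^ k := by
      rw [← mul_rpow (by positivity) hgz]; gcongr
    have : (1 + z) * (1 + g z) ^ k ≤ (2 * z) * ((1 + 1 / g0 c₁) ^ k * g z ^ k) := by
      gcongr; linarith
    nlinarith

lemma case_one {c₁ c₃ z₁ : ℝ} (hc₁ : 0 < c₁) (hz₁ : 0 ≤ z₁) : ∃ c : ℝ, 0 < c ∧ ∀ g : ℝ → ℝ, GG g c₁ c₃ →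
    ∀ z, 0 ≤ z → z ≤ z₁ → c ≤ Qf g c₁ z := by
  refine ⟨c₁ * exp (-exp c₃) * exp (-(z₁ * exp (c₃ * z₁))) / exp (c₃ * z₁), by positivity, ?_⟩
  intro g h z hz hzz
  have hab : |z| ≤ z₁ := by rwa [abs_of_nonneg hz]
  have h1 := h.growth0 hab
  have h2 := h.G_bound hab
  have h3 := h.mills_lower z
  have hQ := h.Q_pos z
  rw [div_le_iff₀ (exp_pos _)]
  calc c₁ * exp (-exp c₃) * exp (-(z₁ * exp (c₃ * z₁))) ≤ c₁ * exp (-exp c₃) * exp (-Gfun g z) := by gcongr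
    _ ≤ _ := h3
    _ ≤ exp (c₃ * z₁) * Qf g c₁ z := by gcongr
    _ = _ := by ring

/-- small z when the parameter is large -/
lemma GG.z_small {g : ℝ → ℝ} {c₁ c₃ : ℝ} (h : GG g c₁ c₃) {z k d η : ℝ} (hk : 0 < k) (hη : 0 < η)
    (hd : η ≤ d) (hz : 0 ≤ z) (hc : d * z * g z ^ k ≤ 1) : z ≤ w0 c₁ + 1 / (η * g0 c₁ ^ k) := by
  have hg0 := g0_pos h.c₁pos
  have hw0 := one_le_w0 c₁
  have hp : 0 < η * g0 c₁ ^ k := by positivity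
  rcases le_total z (w0 c₁) with hzw | hzw
  · have : 0 < 1 / (η * g0 c₁ ^ k) := by positivity
    linarith
  · have h1 := h.lower hzw
    have hd0 : 0 ≤ d := hη.le.trans hd
    have : z * (η * g0 c₁ ^ k) ≤ 1 := by
      calc z * (η * g0 c₁ ^ k) ≤ z * (d * g z ^ k) := by gcongr
        _ = d * z * g z ^ k := by ring
        _ ≤ 1 := hc
    have := (le_div_iff₀ hp).2 this
    linarith

lemma GG.delta_g {g : ℝ → ℝ} {c₁ c₃ : ℝ} (h : GG g c₁ c₃) {z δ : ℝ} (hδ : 0 < δ) (hδ1 : δ ≤ 1)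
    (hz : 0 ≤ z) (hc : δ * z * g z ^ 2 ≤ 1) : (2 * δ) * g z ≤ 2 * (exp (c₃ * w0 c₁) + 1 / g0 c₁) := by
  have hg0 := g0_pos h.c₁pos
  have hw0 := one_le_w0 c₁
  have hgz := h.nonneg hz
  have hi : 0 < 1 / g0 c₁ := by positivity
  have he := exp_pos (c₃ * w0 c₁)
  suffices δ * g z ≤ exp (c₃ * w0 c₁) + 1 / g0 c₁ by linarith
  rcases le_total z (w0 c₁) with hzw | hzw
  · have h1 := h.growth0 (x := z) (a := w0 c₁) (by rwa [abs_of_nonneg hz])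
    rw [abs_of_nonneg hgz] at h1
    nlinarith
  · have h1 := h.lower hzw
    have : δ * g z ≤ 1 / g0 c₁ := by
      rw [le_div_iff₀ hg0]
      calc δ * g z * g0 c₁ ≤ δ * g z * g z := by gcongr
        _ = δ * 1 * g z ^ 2 := by ring
        _ ≤ δ * z * g z ^ 2 := by gcongr; linarith
        _ ≤ 1 := hc
    linarith

set_option maxHeartbeats 1600000 in
lemma case_two (c₁ c₃ d₀ τ₁ τ₂ α : ℝ) (hc₁ : 0 < c₁) (hc₃ : 1 ≤ c₃) (hd₀ : 1 ≤ d₀) (hα0 : 0 ≤ α) (hα1 : α < 1)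
    (hτ₁ : 0 < τ₁) (hτ₂ : 0 < τ₂) :
    ∃ η₀ C : ℝ, 0 < η₀ ∧ 0 < C ∧ ∀ (g : ℝ → ℝ) (ν : Measure ℝ) (δ δ₁ δ₂ d₁ : ℝ), GG g c₁ c₃ →
      IsProbabilityMeasure ν → 0 < δ → δ ≤ η₀ → 0 ≤ δ₁ → 0 ≤ δ₂ → δ₂ ≤ η₀ → (∀ᵐ w ∂ν, δ * |g w| ≤ d₁) →
      IneqProp ν g δ δ₁ δ₂ τ₁ τ₂ d₀ d₁ α → ∀ z : ℝ, 0 ≤ z →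
      δ * z * g z ^ 2 ≤ 1 → δ₁ * z * g z ^ (τ₁ + 1) ≤ 1 → δ₂ * z * g z ^ τ₂ ≤ 1 →
      |(ν (Set.Ioi z)).toReal - Qf g c₁ z| ≤ Qf g c₁ z * (C * (δ * (1 + z * g z ^ 2) + δ₁ * (1 + z * g z ^ (τ₁ + 1))
                + δ₂ * (1 + z * g z ^ τ₂))) := by
  obtain ⟨η₀, C, hη, hη1, hC, hM⟩ := master (⌈τ₁⌉₊ + ⌈τ₂⌉₊) c₁ c₃ d₀ τ₁ τ₂ α hc₁ hc₃ hd₀ hα0 hα1 hτ₁ hτ₂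
  have hg0 := g0_pos hc₁
  set C₀ := 2 * (exp (c₃ * w0 c₁) + 1 / g0 c₁) with hC₀
  have hC0 : 0 ≤ C₀ := by positivity
  obtain ⟨hKd, hKQ, hKb, hKf, hKg⟩ := GG.K_pos (c₃ := c₃) hc₁ hC0
  have hc3 : 0 < c₃ := by linarith
  have hKL : 0 < KL c₁ c₃ C₀ := by unfold KL; positivity
  have e2 := CE_pos (c₃ := c₃) (k := 2) hc₁
  have e1 := CE_pos (c₃ := c₃) (k := τ₁ + 1) hc₁
  have e3 := CE_pos (c₃ := c₃) (k := τ₂) hc₁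
  set A1 := (d₀ * KL c₁ c₃ C₀ * 2 * C + 2 * KQ c₃ C₀) * CE c₁ c₃ 2 with hA1
  set A2 := 2 * Kg c₁ c₃ C₀ * C * CE c₁ c₃ (τ₁ + 1) with hA2
  set A3 := 2 * Kf c₁ c₃ C₀ * C * CE c₁ c₃ τ₂ with hA3
  have pA1 : 0 < A1 := by positivity
  have pA2 : 0 < A2 := by positivity
  have pA3 : 0 < A3 := by positivity
  refine ⟨min η₀ (1/2), A1 + A2 + A3, by positivity, by positivity, ?_⟩
  intro g ν δ δ₁ δ₂ d₁ h hν hδ hδη hδ₁ hδ₂ hδ₂η hae hI z hz hz1 hz2 hz3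
  have hδh : δ ≤ 1/2 := hδη.trans (min_le_right _ _)
  have hmas := hM g ν δ δ₁ δ₂ d₁ h hν hδ (hδη.trans (min_le_left _ _)) hδ₁ hδ₂ (hδ₂η.trans (min_le_left _ _)) hae hI
    z hz hz1 hz2 hz3
  have t1 := Nat.le_ceil τ₁
  have t2 := Nat.le_ceil τ₂
  have t3 : (0:ℝ) ≤ ⌈τ₁⌉₊ := Nat.cast_nonneg _
  have t4 : (0:ℝ) ≤ ⌈τ₂⌉₊ := Nat.cast_nonneg _
  have m2 := hmas 2 (by norm_num) (by push_cast; linarith)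
  have m1 := hmas (τ₁ + 1) (by linarith) (by push_cast; linarith)
  have m3 := hmas τ₂ hτ₂.le (by push_cast; linarith)
  have b2 := h.elem_bound hz (k := 2) (by norm_num)
  have b1 := h.elem_bound hz (k := τ₁ + 1) (by linarith)
  have b3 := h.elem_bound hz hτ₂
  have hgz := h.nonneg hz
  rw [rpow_two (g z)] at b2
  have hdg := h.delta_g hδ (by linarith) hz hz1
  have hQ := h.Q_pos z
  set I2 := ∫ w, (1 + |g w|) ^ (2:ℝ) * Bz g z w ∂ν
  set I1 := ∫ w, (1 + |g w|) ^ (τ₁ + 1) * Bz g z w ∂ν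
  set I3 := ∫ w, (1 + |g w|) ^ τ₂ * Bz g z w ∂ν
  set X2 := 1 + z * g z ^ 2 with hX2
  set X1 := 1 + z * g z ^ (τ₁ + 1) with hX1
  set X3 := 1 + z * g z ^ τ₂ with hX3
  have pX2 : 0 ≤ X2 := by positivity
  have pX1 : 0 ≤ X1 := by positivity
  have pX3 : 0 ≤ X3 := by positivity
  have n2 : I2 ≤ C * (CE c₁ c₃ 2 * X2) := m2.trans (by rw [mul_assoc]; gcongr)
  have n1 : I1 ≤ C * (CE c₁ c₃ (τ₁ + 1) * X1) := m1.trans (by rw [mul_assoc]; gcongr)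
  have n3 : I3 ≤ C * (CE c₁ c₃ τ₂ * X3) := m3.trans (by rw [mul_assoc]; gcongr)
  have n0 : 1 + g z ≤ CE c₁ c₃ 2 * X2 := by
    refine le_trans ?_ b2
    rw [rpow_two]
    have v1 := mul_nonneg hz (sq_nonneg (1 + g z))
    have v2 := sq_nonneg (g z)
    have v3 : (1 + z) * (1 + g z) ^ 2 = z * (1 + g z) ^ 2 + 1 + 2 * g z + g z ^ 2 := by ring
    rw [v3]; linarith
  have key : ∀ s z' : ℝ, |s| = 1 → |z' - z| ≤ 2 * δ →
      (∀ x ξ, |ξ - x| ≤ δ → s * ((if z < x then 1 else 0) - (if z' ≤ ξ then 1 else 0)) ≤ (0:ℝ)) →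
      s * ((ν (Set.Ioi z)).toReal - Qf g c₁ z) ≤ Qf g c₁ z * ((A1 + A2 + A3) * (δ * X2 + δ₁ * X1 + δ₂ * X3)) := by
    intro s z' hs hzz hind
    have S := stein_bound h ν hd₀ hτ₁ hτ₂ hδ (by linarith : δ ≤ 2 * δ) (by linarith) hδ₁ hδ₂ hae hI hz hzz hdg hs hind
    have D := h.Q_diff' hz hzz hdg
    have D2 : s * (Qf g c₁ z' - Qf g c₁ z) ≤ |Qf g c₁ z' - Qf g c₁ z| := by
      refine (le_abs_self _).trans ?_
      rw [abs_mul, hs, one_mul]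
    calc s * ((ν (Set.Ioi z)).toReal - Qf g c₁ z)
        = s * ((ν (Set.Ioi z)).toReal - Qf g c₁ z') + s * (Qf g c₁ z' - Qf g c₁ z) := by ring
      _ ≤ Qf g c₁ z * (d₀ * KL c₁ c₃ C₀ * (2 * δ) * I2 + 2 * Kg c₁ c₃ C₀ * δ₁ * I1 + 2 * Kf c₁ c₃ C₀ * δ₂ * I3)
          + KQ c₃ C₀ * (2 * δ * (1 + g z)) * Qf g c₁ z := add_le_add S (D2.trans D)
      _ ≤ Qf g c₁ z * (d₀ * KL c₁ c₃ C₀ * (2 * δ) * (C * (CE c₁ c₃ 2 * X2))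
            + 2 * Kg c₁ c₃ C₀ * δ₁ * (C * (CE c₁ c₃ (τ₁ + 1) * X1)) + 2 * Kf c₁ c₃ C₀ * δ₂ * (C * (CE c₁ c₃ τ₂ * X3)))
          + KQ c₃ C₀ * (2 * δ * (CE c₁ c₃ 2 * X2)) * Qf g c₁ z := by gcongr
      _ = Qf g c₁ z * (A1 * (δ * X2) + A2 * (δ₁ * X1) + A3 * (δ₂ * X3)) := by rw [hA1, hA2, hA3]; ring
      _ ≤ _ := by
        have u1 : 0 ≤ δ * X2 := by positivity
        have u2 : 0 ≤ δ₁ * X1 := by positivity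
        have u3 : 0 ≤ δ₂ * X3 := by positivity
        gcongr
        have v1 : A1 * (δ * X2) ≤ (A1 + A2 + A3) * (δ * X2) := mul_le_mul_of_nonneg_right (by linarith) u1
        have v2 : A2 * (δ₁ * X1) ≤ (A1 + A2 + A3) * (δ₁ * X1) := mul_le_mul_of_nonneg_right (by linarith) u2
        have v3 : A3 * (δ₂ * X3) ≤ (A1 + A2 + A3) * (δ₂ * X3) := mul_le_mul_of_nonneg_right (by linarith) u3
        rw [mul_add, mul_add]; linarith
  rw [abs_le']
  constructor
  · have := key 1 (z - 2 * δ) (by norm_num) (by rw [abs_le]; constructor <;> linarith) (by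
      intro x ξ hx
      rw [abs_le] at hx
      split_ifs <;> first | (exfalso; linarith) | norm_num)
    linarith
  · have := key (-1) (z + 2 * δ) (by norm_num) (by rw [abs_le]; constructor <;> linarith) (by
      intro x ξ hx
      rw [abs_le] at hx
      split_ifs <;> first | (exfalso; linarith) | norm_num)
    linarith

lemma final_bound (c₁ c₃ d₀ τ₁ τ₂ α : ℝ) (hc₁ : 0 < c₁) (hc₃ : 1 ≤ c₃) (hd₀ : 1 ≤ d₀) (hα0 : 0 ≤ α) (hα1 : α < 1)
    (hτ₁ : 0 < τ₁) (hτ₂ : 0 < τ₂) :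
    ∃ C : ℝ, 0 < C ∧ ∀ (g : ℝ → ℝ) (ν : Measure ℝ) (δ δ₁ δ₂ d₁ : ℝ), GG g c₁ c₃ →
      IsProbabilityMeasure ν → 0 < δ → 0 ≤ δ₁ → 0 ≤ δ₂ → (∀ᵐ w ∂ν, δ * |g w| ≤ d₁) →
      IneqProp ν g δ δ₁ δ₂ τ₁ τ₂ d₀ d₁ α → ∀ z : ℝ, 0 ≤ z →
      δ * z * g z ^ 2 ≤ 1 → δ₁ * z * g z ^ (τ₁ + 1) ≤ 1 → δ₂ * z * g z ^ τ₂ ≤ 1 →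
      |(ν (Set.Ioi z)).toReal - Qf g c₁ z| ≤ Qf g c₁ z * (C * (δ * (1 + z * g z ^ 2) + δ₁ * (1 + z * g z ^ (τ₁ + 1))
                + δ₂ * (1 + z * g z ^ τ₂))) := by
  obtain ⟨η₀, C, hη, hC, hM⟩ := case_two c₁ c₃ d₀ τ₁ τ₂ α hc₁ hc₃ hd₀ hα0 hα1 hτ₁ hτ₂
  have hg0 := g0_pos hc₁
  have hw0 := one_le_w0 c₁
  set z₁ := w0 c₁ + 1 / (η₀ * g0 c₁ ^ (2:ℝ)) + 1 / (η₀ * g0 c₁ ^ τ₂) with hz₁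
  have q1 : 0 < 1 / (η₀ * g0 c₁ ^ (2:ℝ)) := by positivity
  have q2 : 0 < 1 / (η₀ * g0 c₁ ^ τ₂) := by positivity
  obtain ⟨c, hc, hQc⟩ := case_one (c₃ := c₃) hc₁ (by linarith : 0 ≤ z₁)
  refine ⟨C + 1 / (c * η₀), by positivity, ?_⟩
  intro g ν δ δ₁ δ₂ d₁ h hν hδ hδ₁ hδ₂ hae hI z hz hz1 hz2 hz3
  have hQ := h.Q_pos z
  have hgz := h.nonneg hz
  have u1 : δ ≤ δ * (1 + z * g z ^ 2) := by
    have : 0 ≤ δ * (z * g z ^ 2) := by positivity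
    linarith
  have u2 : 0 ≤ δ₁ * (1 + z * g z ^ (τ₁ + 1)) := by positivity
  have u3 : δ₂ ≤ δ₂ * (1 + z * g z ^ τ₂) := by
    have : 0 ≤ δ₂ * (z * g z ^ τ₂) := by positivity
    linarith
  set N := δ * (1 + z * g z ^ 2) + δ₁ * (1 + z * g z ^ (τ₁ + 1)) + δ₂ * (1 + z * g z ^ τ₂) with hN
  have hN0 : 0 ≤ N := by linarith
  have big : z ≤ z₁ → η₀ ≤ N → |(ν (Set.Ioi z)).toReal - Qf g c₁ z| ≤ Qf g c₁ z * ((C + 1 / (c * η₀)) * N) := by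
    intro hzz hNN
    have hcQ := hQc g h z hz hzz
    have hQ1 := h.Q_le_one z
    have hP0 : 0 ≤ (ν (Set.Ioi z)).toReal := ENNReal.toReal_nonneg
    have hP1 : (ν (Set.Ioi z)).toReal ≤ 1 := by
      have := measureReal_le_one (μ := ν) (s := Set.Ioi z)
      exact this
    have : 1 ≤ Qf g c₁ z * (1 / (c * η₀) * N) := by
      calc 1 = c * (1 / (c * η₀) * η₀) := by field_simp
        _ ≤ _ := by gcongr
    have hx : 0 ≤ Qf g c₁ z * (C * N) := by positivity
    calc _ ≤ (1:ℝ) := by rw [abs_le]; constructor <;> linarith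
      _ ≤ _ := by linarith
  rcases le_total δ η₀ with ha | ha
  · rcases le_total δ₂ η₀ with hb | hb
    · refine (hM g ν δ δ₁ δ₂ d₁ h hν hδ ha hδ₁ hδ₂ hb hae hI z hz hz1 hz2 hz3).trans ?_
      gcongr
      have : 0 < 1 / (c * η₀) := by positivity
      linarith
    · exact big (by have := h.z_small hτ₂ hη hb hz hz3; linarith) (by linarith)
  · exact big (by
      have := h.z_small (k := 2) (by norm_num) hη ha hz (by rw [rpow_two]; exact hz1)
      linarith) (by linarith)


theorem stmt_1 (c₁ c₂ c₃ d₀ d₁ τ₁ τ₂ α μ₁ : ℝ)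
    (hd₀ : 1 ≤ d₀) (hd₁ : 0 < d₁) (hτ₁ : 0 < τ₁) (hτ₂ : 0 < τ₂)
    (hα0 : 0 ≤ α) (hα1 : α < 1) :
    ∃ C : ℝ, 0 < C ∧
      ∀ (Ω : Type) [MeasurableSpace Ω] (μ : Measure Ω),
        IsProbabilityMeasure μ →
        ∀ (W W' R : Ω → ℝ) (g : ℝ → ℝ) (lam δ δ₁ δ₂ : ℝ),
        Measurable W → Measurable W' → Measurable R →
        GCond g c₂ c₃ →
        0 < c₁ → (∫ y : ℝ, pfun g c₁ y) = 1 →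
        max (g 1) |g (-1)| = μ₁ →
        0 < δ → 0 < δ₁ → 0 ≤ δ₂ → 0 < lam → lam < 1 →
        -- `(W, W')` is an exchangeable pair
        Measure.map (fun ω => (W ω, W' ω)) μ = Measure.map (fun ω => (W' ω, W ω)) μ →
        -- `|Δ| = |W - W'| ≤ δ`
        (∀ ω, |W ω - W' ω| ≤ δ) →
        -- `E(Δ | W) = λ (g(W) - R(W))`
        (μ[fun ω => W ω - W' ω | MeasurableSpace.comap W Real.measurableSpace]
          =ᵐ[μ] fun ω => lam * (g (W ω) - R ω)) →
        -- conditions (2.6)-(2.10) with `K̂₁ = Δ²/(2λ)`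
        (∀ᵐ ω ∂μ,
          |(μ[fun ω => (W ω - W' ω) ^ 2 / (2 * lam) |
              MeasurableSpace.comap W Real.measurableSpace]) ω - 1|
            ≤ δ₁ * (|g (W ω)| ^ τ₁ + 1)) →
        (∀ᵐ ω ∂μ, |R ω| ≤ δ₂ * (|g (W ω)| ^ τ₂ + 1)) →
        (∀ᵐ ω ∂μ,
          (μ[fun ω => (W ω - W' ω) ^ 2 / (2 * lam) |
              MeasurableSpace.comap W Real.measurableSpace]) ω ≤ d₀) →
        (∀ᵐ ω ∂μ, δ * |g (W ω)| ≤ d₁) →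
        (∀ᵐ ω ∂μ, |R ω| ≤ α * (|g (W ω)| + 1)) →
        ∀ z : ℝ, 0 ≤ z →
          δ * z * g z ^ 2 + δ₁ * z * g z ^ (τ₁ + 1) + δ₂ * z * g z ^ τ₂ ≤ 1 →
          |(μ {ω | z < W ω}).toReal / (∫ y in Set.Ioi z, pfun g c₁ y) - 1|
            ≤ C * (δ * (1 + z * g z ^ 2) + δ₁ * (1 + z * g z ^ (τ₁ + 1))
                + δ₂ * (1 + z * g z ^ τ₂)) := by
  by_cases hc : 0 < c₁ ∧ 1 ≤ c₃
  swap
  · refine ⟨1, one_pos, ?_⟩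
    intro Ω _ μ _ W W' R g lam δ δ₁ δ₂ _ _ _ hG h1
    exact absurd ⟨h1, hG.c₃ge⟩ hc
  obtain ⟨hc₁, hc₃⟩ := hc
  obtain ⟨C, hC, hM⟩ := final_bound c₁ c₃ d₀ τ₁ τ₂ α hc₁ hc₃ hd₀ hα0 hα1 hτ₁ hτ₂
  refine ⟨C, hC, ?_⟩
  intro Ω _ μ _ W W' R g lam δ δ₁ δ₂ hW hW' _ hG _ hInt1 _ hδ hδ₁ hδ₂ hlam _ hex hΔ hE hK1 hR2 hKd hg1 hRa z hz hcond
  have h : GG g c₁ c₃ := ⟨hG.diff, hG.mono, hG.zero, hG.c₃ge, hG.derivBound, hc₁, hInt1⟩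
  have hgz := h.nonneg hz
  have hI := ineqProp_of_pair _ μ W W' R g lam δ δ₁ δ₂ τ₁ τ₂ d₀ d₁ α hW hW' h.meas hlam rfl hex hΔ hE hK1 hR2 hKd hg1 hRa
  have p1 : 0 ≤ δ * z * g z ^ 2 := by positivity
  have p2 : 0 ≤ δ₁ * z * g z ^ (τ₁ + 1) := by positivity
  have p3 : 0 ≤ δ₂ * z * g z ^ τ₂ := by positivity
  have hae : ∀ᵐ w ∂(Measure.map W μ), δ * |g w| ≤ d₁ := by
    rw [ae_map_iff hW.aemeasurable]
    · exact hg1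
    · exact measurableSet_le (measurable_const.mul (continuous_abs.measurable.comp h.meas)) measurable_const
  have key := hM g (Measure.map W μ) δ δ₁ δ₂ d₁ h (Measure.isProbabilityMeasure_map hW.aemeasurable) hδ hδ₁.le hδ₂ hae hI
    z hz (by linarith) (by linarith) (by linarith)
  rw [Measure.map_apply hW measurableSet_Ioi] at key
  have hQ := h.Q_pos z
  change |(μ (W ⁻¹' Set.Ioi z)).toReal / Qf g c₁ z - 1| ≤ _
  rw [div_sub_one hQ.ne', abs_div, abs_of_pos hQ, div_le_iff₀ hQ]
  rw [mul_comm] at key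
  exact key
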